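/- arXiv:1901.06375 — 2 statements merged into one kernel-verified Lean document; each statement's English description precedes it below -/
import Mathlib

section
/- Let s and r be nonzero integers with |s| ≤ 27 and |s| ≠ 24. If q = s/r lies in the open interval (-4, 4), then q is a relation number, i.e., the group generated by a and b_q in SL(2,ℂ) is not free of rank two. -/
/-- `a = [[1,0],[1,1]]` as an element of `SL(2, ℂ)`. -/
def matA : Matrix.SpecialLinearGroup (Fin 2) ℂ :=
  ⟨!![1, 0; 1, 1], by simp [Matrix.det_fin_two_of]⟩

/-- `b_q = [[1,q],[0,1]]` as an element of `SL(2, ℂ)`. -/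
def matB (q : ℂ) : Matrix.SpecialLinearGroup (Fin 2) ℂ :=
  ⟨!![1, q; 0, 1], by simp [Matrix.det_fin_two_of]⟩

/-- `q` is a relation number: the homomorphism `F₂ → SL(2,ℂ)`, `x ↦ a`, `y ↦ b_q`,
is not injective. -/
def IsRelationNumber (q : ℂ) : Prop :=
  ¬ Function.Injective
    (FreeGroup.lift (fun i : Bool => if i then matA else matB q) :
      FreeGroup Bool →* Matrix.SpecialLinearGroup (Fin 2) ℂ)

/-- `q` is an `ℓ`-step relation number: there are `k ≤ ℓ` and nonzero integers
`m_1, …, m_{2k+1}` with `b_q^{m_1} a^{m_2} ⋯ b_q^{m_{2k+1}}` lower triangular. -/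
def IsStepRelationNumber (ℓ : ℕ) (q : ℂ) : Prop :=
  ∃ k : ℕ, k ≤ ℓ ∧ ∃ m : Fin (2 * k + 1) → ℤ, (∀ i, m i ≠ 0) ∧
    ((List.ofFn (fun i : Fin (2 * k + 1) =>
      (if (i : ℕ) % 2 = 0 then matB q else matA) ^ (m i))).prod).val 0 1 = 0

/-- The residue class `w + smℤ` is `s`-good with good representative `w`. -/
def IsGoodRep (s w m : ℤ) : Prop :=
  ∃ y : ℤ, y * (Int.gcd w (s * m) : ℤ) ∣ m * (Int.gcd w s : ℤ) ∧
    (w ∣ s * m * y + (Int.gcd w (s * m) : ℤ) ∨ w ∣ s * m * y - (Int.gcd w (s * m) : ℤ))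

namespace RelNum

/-- The representation attached to the parameter `q`. -/
noncomputable def phi (q : ℂ) : FreeGroup Bool →* Matrix.SpecialLinearGroup (Fin 2) ℂ :=
  FreeGroup.lift (fun i : Bool => if i then matA else matB q)

lemma matA_zpow (n : ℤ) : (matA ^ n).val = !![1, 0; (n : ℂ), 1] := by
  have h1 : ∀ k : ℕ, (matA ^ k).val = !![1, 0; (k : ℂ), 1] := by
    intro k
    induction k with
    | zero => ext i j; fin_cases i <;> fin_cases j <;> simp
    | succ k ih =>
      rw [pow_succ, Matrix.SpecialLinearGroup.coe_mul, ih]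
      ext i j; fin_cases i <;> fin_cases j <;> simp [matA, Matrix.mul_apply, Fin.sum_univ_two]
  cases n with
  | ofNat k => simpa using h1 k
  | negSucc k =>
    rw [zpow_negSucc, Matrix.SpecialLinearGroup.coe_inv, h1, Matrix.adjugate_fin_two_of]
    ext i j; fin_cases i <;> fin_cases j <;> simp

lemma matB_zpow (q : ℂ) (n : ℤ) : (matB q ^ n).val = !![1, n * q; 0, 1] := by
  have h1 : ∀ k : ℕ, (matB q ^ k).val = !![1, k * q; 0, 1] := by
    intro k
    induction k with
    | zero => ext i j; fin_cases i <;> fin_cases j <;> simp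
    | succ k ih =>
      rw [pow_succ, Matrix.SpecialLinearGroup.coe_mul, ih]
      ext i j; fin_cases i <;> fin_cases j <;> simp [matB, Matrix.mul_apply, Fin.sum_univ_two]
      ring
  cases n with
  | ofNat k => simpa using h1 k
  | negSucc k =>
    rw [zpow_negSucc, Matrix.SpecialLinearGroup.coe_inv, h1, Matrix.adjugate_fin_two_of]
    ext i j; fin_cases i <;> fin_cases j <;> simp
    ring

/-- `(x, y)` is, up to scaling, the image of a base vector under a reduced word; `la` records
whether the last letter was a power of `a`; ping-pong data at the parameter `4` is kept. -/
def P (q : ℂ) (k : Fin 2) (la : Bool) (x y : ℂ) : Prop :=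
  ∃ (g : FreeGroup Bool) (c : ℂ) (U V : ℤ),
    (phi q g).val 0 k = c * x ∧ (phi q g).val 1 k = c * y ∧
    (phi 4 g).val 0 k = U ∧ (phi 4 g).val 1 k = V ∧
    (if la then |U| < 2 * |V| else 2 * |V| < |U|)

lemma P_start0 (q : ℂ) (G : ℂ) (hG : G ≠ 0) : P q 0 false G 0 :=
  ⟨1, G⁻¹, 1, 0, by simp [hG], by simp, by simp, by simp, by simp⟩

lemma P_start1 (q : ℂ) (G : ℂ) (hG : G ≠ 0) : P q 1 true 0 G :=
  ⟨1, G⁻¹, 0, 1, by simp, by simp [hG], by simp, by simp, by simp⟩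

lemma P_scale {q : ℂ} {k : Fin 2} {la : Bool} {x y x' y' : ℂ} (l : ℂ) (h : P q k la x y)
    (hx : x = l * x') (hy : y = l * y') : P q k la x' y' := by
  obtain ⟨g, c, U, V, h1, h2, h3, h4, h5⟩ := h
  exact ⟨g, c * l, U, V, by rw [h1, hx]; ring, by rw [h2, hy]; ring, h3, h4, h5⟩

lemma phi_true (q : ℂ) (n : ℤ) : (phi q (FreeGroup.of true ^ n)).val = !![1, 0; (n : ℂ), 1] := by
  rw [map_zpow, ← matA_zpow]; simp [phi]

lemma phi_false (q : ℂ) (n : ℤ) :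
    (phi q (FreeGroup.of false ^ n)).val = !![1, n * q; 0, 1] := by
  rw [map_zpow, ← matB_zpow]; simp [phi]

lemma P_a {q : ℂ} {k : Fin 2} {x y : ℂ} (n : ℤ) (hn : n ≠ 0) (h : P q k false x y) :
    P q k true x (y + n * x) := by
  obtain ⟨g, c, U, V, h1, h2, h3, h4, h5⟩ := h
  refine ⟨FreeGroup.of true ^ n * g, c, U, V + n * U, ?_, ?_, ?_, ?_, ?_⟩
  · rw [map_mul, Matrix.SpecialLinearGroup.coe_mul, phi_true]
    simp [Matrix.mul_apply, Fin.sum_univ_two, h1]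
  · rw [map_mul, Matrix.SpecialLinearGroup.coe_mul, phi_true]
    simp [Matrix.mul_apply, Fin.sum_univ_two, h1, h2]; ring
  · rw [map_mul, Matrix.SpecialLinearGroup.coe_mul, phi_true]
    simp [Matrix.mul_apply, Fin.sum_univ_two, h3]
  · rw [map_mul, Matrix.SpecialLinearGroup.coe_mul, phi_true]
    simp [Matrix.mul_apply, Fin.sum_univ_two, h3, h4]; ring
  · simp only [Bool.false_eq_true, if_false] at h5
    simp only [if_true]
    have e1 : 1 ≤ |n| := Int.one_le_abs hn
    have e2 : |n * U| ≤ |V + n * U| + |V| := by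
      have := abs_sub (V + n * U) V
      simpa using this
    rw [abs_mul] at e2
    nlinarith [abs_nonneg U]

lemma P_b {q : ℂ} {k : Fin 2} {x y : ℂ} (n : ℤ) (hn : n ≠ 0) (h : P q k true x y) :
    P q k false (x + n * q * y) y := by
  obtain ⟨g, c, U, V, h1, h2, h3, h4, h5⟩ := h
  refine ⟨FreeGroup.of false ^ n * g, c, U + n * 4 * V, V, ?_, ?_, ?_, ?_, ?_⟩
  · rw [map_mul, Matrix.SpecialLinearGroup.coe_mul, phi_false]
    simp [Matrix.mul_apply, Fin.sum_univ_two, h1, h2]; ring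
  · rw [map_mul, Matrix.SpecialLinearGroup.coe_mul, phi_false]
    simp [Matrix.mul_apply, Fin.sum_univ_two, h2]
  · rw [map_mul, Matrix.SpecialLinearGroup.coe_mul, phi_false]
    simp [Matrix.mul_apply, Fin.sum_univ_two, h3, h4]
  · rw [map_mul, Matrix.SpecialLinearGroup.coe_mul, phi_false]
    simp [Matrix.mul_apply, Fin.sum_univ_two, h4]
  · simp only [if_true] at h5
    simp only [Bool.false_eq_true, if_false]
    have e1 : 1 ≤ |n| := Int.one_le_abs hn
    have e2 : |n * 4 * V| ≤ |U + n * 4 * V| + |U| := by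
      have := abs_sub (U + n * 4 * V) U
      simpa using this
    rw [abs_mul, abs_mul] at e2
    norm_num at e2
    nlinarith [abs_nonneg V]

/-- The conjugate of the stabilizing generator. -/
def gen (k : Fin 2) : FreeGroup Bool := if k = 0 then FreeGroup.of false else FreeGroup.of true

/-- Its parameter. -/
def par (q : ℂ) (k : Fin 2) : ℂ := if k = 0 then q else -1

lemma conj_form (q : ℂ) (k : Fin 2) (g : FreeGroup Bool) :
    (phi q (g * gen k * g⁻¹)).val =
      !![1 - par q k * (phi q g).val 0 k * (phi q g).val 1 k, par q k * (phi q g).val 0 k ^ 2;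
        - par q k * (phi q g).val 1 k ^ 2,
        1 + par q k * (phi q g).val 0 k * (phi q g).val 1 k] := by
  have hd := (phi q g).det_coe
  rw [Matrix.det_fin_two] at hd
  rw [map_mul, map_mul, map_inv, Matrix.SpecialLinearGroup.coe_mul,
    Matrix.SpecialLinearGroup.coe_mul, Matrix.SpecialLinearGroup.coe_inv, Matrix.adjugate_fin_two]
  have hA : (phi q (FreeGroup.of true)).val = !![1, 0; 1, 1] := by
    simpa using phi_true q 1
  have hB : (phi q (FreeGroup.of false)).val = !![1, q; 0, 1] := by
    simpa using phi_false q 1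
  fin_cases k
  · simp only [gen, par, Fin.zero_eta, if_true, hB]
    ext i j; fin_cases i <;> fin_cases j <;>
      simp [Matrix.mul_apply, Fin.sum_univ_two] <;>
      first | linear_combination hd | ring
  · have h10 : (1 : Fin 2) ≠ 0 := by decide
    simp only [gen, par, Fin.mk_one, if_neg h10, hA]
    ext i j; fin_cases i <;> fin_cases j <;>
      simp [Matrix.mul_apply, Fin.sum_univ_two] <;>
      first | linear_combination hd | ring

lemma final_a {q : ℂ} {k : Fin 2} {x : ℂ} (h : P q k true x 0) : IsRelationNumber q := by
  obtain ⟨g, c, U, V, h1, h2, h3, h4, h5⟩ := h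
  intro hinj
  change Function.Injective (phi q) at hinj
  have hc : (g * gen k * g⁻¹) * FreeGroup.of false = FreeGroup.of false * (g * gen k * g⁻¹) := by
    apply hinj
    apply Subtype.ext
    rw [map_mul, map_mul (phi q) (FreeGroup.of false), Matrix.SpecialLinearGroup.coe_mul,
      Matrix.SpecialLinearGroup.coe_mul]
    have hB : (phi q (FreeGroup.of false)).val = !![1, q; 0, 1] := by
      simpa using phi_false q 1
    rw [conj_form, hB, h1, h2]
    ext i j; fin_cases i <;> fin_cases j <;>
      simp [Matrix.mul_apply, Fin.sum_univ_two] <;> ring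
  have h := congrArg (fun z => (phi 4 z).val 0 0) hc
  beta_reduce at h
  have hB : (phi 4 (FreeGroup.of false)).val = !![1, 4; 0, 1] := by
    simpa using phi_false 4 1
  rw [map_mul, map_mul (phi 4) (FreeGroup.of false), Matrix.SpecialLinearGroup.coe_mul,
      Matrix.SpecialLinearGroup.coe_mul, conj_form, hB, h3, h4] at h
  simp [Matrix.mul_apply, Fin.sum_univ_two] at h
  have hp : par 4 k ≠ 0 := by unfold par; split_ifs <;> norm_num
  have hV : V = 0 := by simpa [hp] using h
  subst hV
  simp only [if_true, abs_zero, mul_zero] at h5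
  exact absurd h5 (not_lt.mpr (abs_nonneg U))

lemma final_b {q : ℂ} {k : Fin 2} {y : ℂ} (h : P q k false 0 y) : IsRelationNumber q := by
  obtain ⟨g, c, U, V, h1, h2, h3, h4, h5⟩ := h
  intro hinj
  change Function.Injective (phi q) at hinj
  have hc : (g * gen k * g⁻¹) * FreeGroup.of true = FreeGroup.of true * (g * gen k * g⁻¹) := by
    apply hinj
    apply Subtype.ext
    rw [map_mul, map_mul (phi q) (FreeGroup.of true), Matrix.SpecialLinearGroup.coe_mul,
      Matrix.SpecialLinearGroup.coe_mul]
    have hA : (phi q (FreeGroup.of true)).val = !![1, 0; 1, 1] := by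
      simpa using phi_true q 1
    rw [conj_form, hA, h1, h2]
    ext i j; fin_cases i <;> fin_cases j <;>
      simp [Matrix.mul_apply, Fin.sum_univ_two] <;> ring
  have h := congrArg (fun z => (phi 4 z).val 0 0) hc
  beta_reduce at h
  have hA : (phi 4 (FreeGroup.of true)).val = !![1, 0; 1, 1] := by
    simpa using phi_true 4 1
  rw [map_mul, map_mul (phi 4) (FreeGroup.of true), Matrix.SpecialLinearGroup.coe_mul,
      Matrix.SpecialLinearGroup.coe_mul, conj_form, hA, h3, h4] at h
  simp [Matrix.mul_apply, Fin.sum_univ_two] at h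
  have hp : par 4 k ≠ 0 := by unfold par; split_ifs <;> norm_num
  have hU : U = 0 := by simpa [hp] using h
  subst hU
  simp only [Bool.false_eq_true, if_false, abs_zero] at h5
  exact absurd h5 (not_lt.mpr (by positivity))

lemma rel_neg {q : ℂ} (h : IsRelationNumber (-q)) : IsRelationNumber q := by
  intro hinj
  apply h
  change Function.Injective (phi q) at hinj
  change Function.Injective (phi (-q))
  let sg : FreeGroup Bool →* FreeGroup Bool :=
    FreeGroup.lift (fun i : Bool => if i then FreeGroup.of true else (FreeGroup.of false)⁻¹)
  have h1 : sg.comp sg = MonoidHom.id _ := by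
    ext i; cases i <;> simp [sg]
  have h2 : phi (-q) = (phi q).comp sg := by
    apply FreeGroup.ext_hom
    intro i
    cases i
    · simp only [phi, sg, FreeGroup.lift_apply_of, MonoidHom.comp_apply, Bool.false_eq_true,
        if_false, map_inv]
      apply Subtype.ext
      rw [Matrix.SpecialLinearGroup.coe_inv]
      simp [matB, Matrix.adjugate_fin_two_of]
    · simp [phi, sg]
  have h3 : Function.Injective sg := by
    intro a b hab
    have e1 := DFunLike.congr_fun h1 a
    have e2 := DFunLike.congr_fun h1 b
    simp only [MonoidHom.comp_apply, MonoidHom.id_apply] at e1 e2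
    rw [← e1, ← e2, hab]
  rw [h2, MonoidHom.coe_comp]
  exact hinj.comp h3

/-- Evaluation helper: makes the kernel compute `n` before going on. -/
def force (n : ℕ) (f : ℕ → Bool) : Bool :=
  match n with
  | 0 => f 0
  | m + 1 => f (m + 1)

lemma force_eq (n : ℕ) (f : ℕ → Bool) : force n f = f n := by
  cases n <;> rfl

/-- Zigzag decoding. -/
def dec (n : ℕ) : ℤ :=
  match n % 2 with
  | 0 => Int.ofNat (n / 2)
  | _ => Int.negSucc (n / 2)

/-- Selects `v` if the flag is set. -/
def hi (t : Bool) (v : ℤ) : ℤ := match t with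
  | true => v
  | false => 0

/-- Selects `v` if the flag is not set. -/
def lo (t : Bool) (v : ℤ) : ℤ := match t with
  | true => 0
  | false => v

/-- Nonvanishing of `c1 * r + c0` for the relevant `r`. -/
def nz (s : ℕ) (exc : List ℕ) (r0 N : ℕ) (c1 c0 : ℤ) : Bool :=
  match c1 == 0 with
  | true => !(c0 == 0)
  | false => !(c0 % c1 == 0) || !((-(c0 / c1) - (r0 : ℤ)) % (N : ℤ) == 0)
      || Nat.ble (4 * (-(c0 / c1)).natAbs) s || exc.elem (-(c0 / c1)).natAbs

/-- Validity of a move. -/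
def mv (s : ℕ) (exc : List ℕ) (r0 N : ℕ) (d c1 c0 : ℤ) : Bool :=
  (c1 * (r0 : ℤ) + c0) % d == 0 && ((c1 * (N : ℤ)) % d == 0 && nz s exc r0 N c1 c0)

/-- Validity of a path, read from the digits of `st` in base `B`. -/
def path (s : ℕ) (exc : List ℕ) (r0 N B : ℕ) : ℕ → Bool → ℤ → ℤ → Bool → ℕ → Bool
  | 0, _, _, _, _, _ => false
  | f + 1, false, X, V, τ, st =>
    force (st % B) fun c => force (st / B) fun st' =>
      mv s exc r0 N X (hi (c % 2 == 1) (dec (c / 2)) - hi τ V)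
        (lo (c % 2 == 1) (dec (c / 2)) - lo τ V) &&
      (dec (c / 2) == 0 || path s exc r0 N B f true X (dec (c / 2)) (c % 2 == 1) st')
  | f + 1, true, X, V, τ, st =>
    force (st % B) fun c => force (st / B) fun st' =>
      mv s exc r0 N ((s : ℤ) * V) (lo (c % 2 == 1) (dec (c / 2)) - lo τ X)
        (hi (c % 2 == 1) (dec (c / 2)) - hi τ X) &&
      (dec (c / 2) == 0 || path s exc r0 N B f false (dec (c / 2)) V (c % 2 == 1) st')

/-- Validity of a leaf. -/
def leafOk (s : ℕ) (exc : List ℕ) (r0 N c : ℕ) : Bool :=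
  force (2 ^ (c % 64)) fun B => force (c / 64) fun c1 => force (c1 / 2 % B) fun G =>
    force (c1 / 2 / B) fun st => !(G == 0) &&
      match c1 % 2 with
      | 0 => path s exc r0 N B 60 false (Int.ofNat G) 0 false st
      | _ => path s exc r0 N B 60 true 0 (Int.ofNat G) false st

/-- Residue trees, as forests. -/
inductive T
  | E : T
  | K : ℕ → T → T
  | L : ℕ → T → T
  | N : ℕ → T → T → T

/-- The forest covers the `k` classes `r0 + i * D` modulo `M`. -/
def chk (s : ℕ) (exc : List ℕ) : T → ℕ → ℕ → ℕ → ℕ → Bool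
  | T.E, k, _, _, _ => k == 0
  | T.K g t, k, r0, D, M =>
    Nat.ble 2 g && (r0 % g == 0 && (M % g == 0 && (s % g == 0 &&
      force (k - 1) fun k => force (r0 + D) fun r1 => chk s exc t k r1 D M)))
  | T.L c t, k, r0, D, M =>
    leafOk s exc r0 M c &&
      force (k - 1) fun k => force (r0 + D) fun r1 => chk s exc t k r1 D M
  | T.N p u t, k, r0, D, M =>
    Nat.ble 1 p && ((force (M * p) fun M' => chk s exc u p r0 M M') &&
      force (k - 1) fun k => force (r0 + D) fun r1 => chk s exc t k r1 D M)

/-- Check of the exceptional values. -/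
def chkE (s : ℕ) : List (ℕ × ℕ) → Bool
  | [] => true
  | (r, c) :: l => leafOk s [] r 0 c && chkE s l

/-- What is to be proved for given `s` and `r`. -/
def Good (s : ℕ) (r : ℤ) : Prop := IsRelationNumber ((s : ℂ) / (r : ℂ))

lemma mv_sound {s : ℕ} {exc : List ℕ} {r0 N : ℕ} {d c1 c0 : ℤ}
    (h : mv s exc r0 N d c1 c0 = true) {r : ℤ} (hr : (N : ℤ) ∣ r - r0)
    (h4 : (s : ℤ) < 4 * |r|) (he : r.natAbs ∉ exc) :
    ∃ n : ℤ, n ≠ 0 ∧ c1 * r + c0 = n * d := by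
  simp only [mv, Bool.and_eq_true, beq_iff_eq] at h
  obtain ⟨h1, h2, h3⟩ := h
  have d1 := Int.dvd_of_emod_eq_zero h1
  have d2 := Int.dvd_of_emod_eq_zero h2
  have hd : d ∣ c1 * r + c0 := by
    obtain ⟨k, hk⟩ := hr
    have : c1 * r + c0 = (c1 * r0 + c0) + (c1 * N) * k := by
      have : r = r0 + N * k := by linarith
      rw [this]; ring
    rw [this]
    exact dvd_add d1 (Dvd.dvd.mul_right d2 k)
  have hne : c1 * r + c0 ≠ 0 := by
    intro h0
    unfold nz at h3
    by_cases hc : c1 = 0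
    · subst hc
      simp at h3 h0
      exact h3 h0
    · have hb : (c1 == 0) = false := by simpa using hc
      rw [hb] at h3
      have hq : c0 = c1 * (-r) := by linarith
      have e1 : c0 % c1 = 0 := by rw [hq]; exact Int.mul_emod_right _ _
      have e2 : -(c0 / c1) = r := by
        rw [hq, Int.mul_ediv_cancel_left _ hc]; ring
      have e3 : (r - (r0 : ℤ)) % (N : ℤ) = 0 := Int.emod_eq_zero_of_dvd hr
      simp only [e1, e2, e3, Bool.or_eq_true, Nat.ble_eq, List.elem_eq_mem, decide_eq_true_eq] at h3
      rcases h3 with ((h3 | h3) | h3) | h3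
      · simp at h3
      · simp at h3
      · have : ((4 * r.natAbs : ℕ) : ℤ) ≤ s := by exact_mod_cast h3
        push_cast at this
        linarith
      · exact he h3
  obtain ⟨n, hn⟩ := hd
  refine ⟨n, ?_, by rw [hn]; ring⟩
  rintro rfl
  exact hne (by rw [hn]; ring)

/-- Power of `r` for a flag. -/
def rp (r : ℤ) (t : Bool) : ℤ := if t then r else 1

lemma path_sound {s : ℕ} {exc : List ℕ} {r0 N B : ℕ} {r : ℤ} (hr : (N : ℤ) ∣ r - r0)
    (h4 : (s : ℤ) < 4 * |r|) (he : r.natAbs ∉ exc) {k : Fin 2} :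
    ∀ (f : ℕ) (la : Bool) (X V : ℤ) (τ : Bool) (st : ℕ),
      path s exc r0 N B f la X V τ st = true →
      P ((s : ℂ) / (r : ℂ)) k la (X : ℂ) (((rp r τ * V : ℤ)) : ℂ) → Good s r := by
  have hr0 : (r : ℂ) ≠ 0 := by
    have : r ≠ 0 := by
      rintro rfl
      simp at h4
      omega
    exact_mod_cast this
  intro f
  induction f with
  | zero => intro la X V τ st h; simp [path] at h
  | succ f ih =>
    intro la X V τ st h hP
    cases la with
    | false =>
      simp only [path, force_eq, Bool.and_eq_true, Bool.or_eq_true, beq_iff_eq] at h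
      obtain ⟨h1, h2⟩ := h
      generalize dec (st % B / 2) = v at h1 h2
      generalize (st % B % 2 == 1) = t at h1 h2
      obtain ⟨n, hn0, hn⟩ := mv_sound h1 hr h4 he
      have hn' : rp r t * v = rp r τ * V + n * X := by
        cases t <;> cases τ <;> simp [hi, lo, rp] at hn ⊢ <;> linarith
      have h3 := P_a n hn0 hP
      have h5 : (((rp r τ * V : ℤ)) : ℂ) + n * (X : ℂ) = ((rp r t * v : ℤ) : ℂ) := by
        rw [hn']; push_cast; ring
      rw [h5] at h3
      rcases h2 with h2 | h2
      · subst h2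
        apply final_a (k := k) (x := (X : ℂ))
        simpa using h3
      · exact ih true X v t _ h2 h3
    | true =>
      simp only [path, force_eq, Bool.and_eq_true, Bool.or_eq_true, beq_iff_eq] at h
      obtain ⟨h1, h2⟩ := h
      generalize dec (st % B / 2) = v at h1 h2
      generalize (st % B % 2 == 1) = t at h1 h2
      obtain ⟨n, hn0, hn⟩ := mv_sound h1 hr h4 he
      have h3 := P_b n hn0 hP
      have h5 : P ((s : ℂ) / (r : ℂ)) k false (v : ℂ) (((rp r t * V : ℤ)) : ℂ) := by
        refine P_scale ((rp r τ : ℂ) / (rp r t : ℂ)) h3 ?_ ?_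
        · have hn2 := congrArg (fun z : ℤ => (z : ℂ)) hn
          cases t <;> cases τ <;> simp [hi, lo, rp] at hn2 ⊢ <;> field_simp <;>
            linear_combination -hn2
        · cases t <;> cases τ <;> simp [rp] <;> field_simp
      rcases h2 with h2 | h2
      · subst h2
        apply final_b (k := k) (y := (((rp r t * V : ℤ)) : ℂ))
        simpa using h5
      · exact ih false v V t _ h2 h5

lemma leaf_sound {s : ℕ} {exc : List ℕ} {r0 N c : ℕ} (h : leafOk s exc r0 N c = true) {r : ℤ}
    (hr : (N : ℤ) ∣ r - r0) (h4 : (s : ℤ) < 4 * |r|) (he : r.natAbs ∉ exc) : Good s r := by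
  simp only [leafOk, force_eq, Bool.and_eq_true] at h
  obtain ⟨h0, h⟩ := h
  have hG : c / 64 / 2 % 2 ^ (c % 64) ≠ 0 := by simpa using h0
  generalize c / 64 / 2 % 2 ^ (c % 64) = G at h hG
  have hG' : ((G : ℤ) : ℂ) ≠ 0 := by exact_mod_cast hG
  split at h
  · refine path_sound hr h4 he (k := 0) _ _ _ _ _ _ h ?_
    have := P_start0 ((s : ℂ) / (r : ℂ)) _ hG'
    simpa using this
  · refine path_sound hr h4 he (k := 1) _ _ _ _ _ _ h ?_
    have := P_start1 ((s : ℂ) / (r : ℂ)) _ hG'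
    simpa [rp] using this

lemma chk_sound {s : ℕ} {exc : List ℕ} {r : ℤ} (hc : IsCoprime (s : ℤ) r)
    (h4 : (s : ℤ) < 4 * |r|) (he : r.natAbs ∉ exc) (t : T) :
    ∀ k r0 D M : ℕ, chk s exc t k r0 D M = true →
      ∀ i : ℕ, i < k → (M : ℤ) ∣ r - ((r0 + i * D : ℕ) : ℤ) → Good s r := by
  induction t with
  | E => intro k r0 D M h i hi; simp [chk] at h; omega
  | K g t ih =>
    intro k r0 D M h i hi hM
    simp only [chk, force_eq, Bool.and_eq_true, beq_iff_eq, Nat.ble_eq] at h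
    obtain ⟨h1, h2, h3, h5, h6⟩ := h
    rcases i with _ | i
    · exfalso
      have a1 : (g : ℤ) ∣ M := by exact_mod_cast Nat.dvd_of_mod_eq_zero h3
      have a2 : (g : ℤ) ∣ r0 := by exact_mod_cast Nat.dvd_of_mod_eq_zero h2
      have a3 : (g : ℤ) ∣ s := by exact_mod_cast Nat.dvd_of_mod_eq_zero h5
      have a4 : (g : ℤ) ∣ r := by
        have := dvd_add (a1.trans hM) a2
        simpa using this
      have := hc.isUnit_of_dvd' a3 a4
      have := Int.isUnit_iff.mp this
      omega
    · refine ih _ _ _ _ h6 i (by omega) ?_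
      have e : r0 + D + i * D = r0 + (i + 1) * D := by ring
      rw [e]; exact hM
  | L c t ih =>
    intro k r0 D M h i hi hM
    simp only [chk, force_eq, Bool.and_eq_true] at h
    obtain ⟨h1, h6⟩ := h
    rcases i with _ | i
    · exact leaf_sound h1 (by simpa using hM) h4 he
    · refine ih _ _ _ _ h6 i (by omega) ?_
      have e : r0 + D + i * D = r0 + (i + 1) * D := by ring
      rw [e]; exact hM
  | N p u t ihu ih =>
    intro k r0 D M h i hi hM
    simp only [chk, force_eq, Bool.and_eq_true, Nat.ble_eq] at h
    obtain ⟨h1, h2, h6⟩ := h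
    rcases i with _ | i
    · obtain ⟨z, hz⟩ := hM
      have hp : (0 : ℤ) < p := by exact_mod_cast h1
      have b1 := Int.emod_nonneg z hp.ne'
      have b2 := Int.emod_lt_of_pos z hp
      have b3 := Int.mul_ediv_add_emod z p
      refine ihu _ _ _ _ h2 (z % p).toNat (by omega) ?_
      refine ⟨z / p, ?_⟩
      push_cast
      rw [Int.toNat_of_nonneg b1]
      push_cast at hz
      linear_combination hz - (M : ℤ) * b3
    · refine ih _ _ _ _ h6 i (by omega) ?_
      have e : r0 + D + i * D = r0 + (i + 1) * D := by ring
      rw [e]; exact hM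

lemma good_neg {s : ℕ} {r : ℤ} (h : Good s (-r)) : Good s r := by
  apply rel_neg
  have e : -((s : ℂ) / (r : ℂ)) = (s : ℂ) / ((-r : ℤ) : ℂ) := by
    push_cast; rw [div_neg]
  rw [e]; exact h

lemma good_natAbs {s : ℕ} {r : ℤ} (h : Good s (r.natAbs : ℤ)) : Good s r := by
  rcases Int.natAbs_eq r with e | e
  · rw [e]; exact h
  · rw [e]; apply good_neg; rw [neg_neg]; exact h

lemma chkE_sound {s : ℕ} {l : List (ℕ × ℕ)} (h : chkE s l = true) :
    ∀ r : ℤ, (s : ℤ) < 4 * |r| → r.natAbs ∈ l.map Prod.fst → Good s r := by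
  induction l with
  | nil => intro r _ h; simp at h
  | cons a l ih =>
    obtain ⟨r1, c⟩ := a
    simp only [chkE, Bool.and_eq_true] at h
    intro r h4 hm
    simp only [List.map_cons, List.mem_cons] at hm
    rcases hm with hm | hm
    · apply good_natAbs
      refine leaf_sound h.1 (r := (r.natAbs : ℤ)) ?_ ?_ (by simp)
      · rw [hm]; simp
      · simpa using h4
    · exact ih h.2 r h4 hm

/-- The complete claim for one value of `s`. -/
def Full (s : ℕ) : Prop := ∀ r : ℤ, IsCoprime (s : ℤ) r → (s : ℤ) < 4 * |r| → Good s r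

lemma full_of {s : ℕ} (hs : 0 < s) (l : List (ℕ × ℕ)) (t : T) (hE : chkE s l = true)
    (ht : chk s (l.map Prod.fst) t (s / 2 + 1) 0 1 s = true) : Full s := by
  have key : ∀ r : ℤ, IsCoprime (s : ℤ) r → (s : ℤ) < 4 * |r| → r % s ≤ s / 2 → Good s r := by
    intro r hc h4 h2
    by_cases he : r.natAbs ∈ l.map Prod.fst
    · exact chkE_sound hE r h4 he
    · have hs' : (0 : ℤ) < s := by exact_mod_cast hs
      have b1 := Int.emod_nonneg r hs'.ne'
      refine chk_sound hc h4 he t _ _ _ _ ht (r % s).toNat (by omega) ?_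
      push_cast
      rw [Int.toNat_of_nonneg b1]
      refine ⟨r / s, ?_⟩
      have b3 := Int.mul_ediv_add_emod r s
      linear_combination -b3
  intro r hc h4
  by_cases h2 : r % s ≤ s / 2
  · exact key r hc h4 h2
  · apply good_neg
    apply key
    · exact hc.neg_right
    · simpa using h4
    · have hs' : (0 : ℤ) < s := by exact_mod_cast hs
      have b1 := Int.emod_nonneg r hs'.ne'
      have b2 := Int.emod_lt_of_pos r hs'
      have b3 := Int.mul_ediv_add_emod r s
      have : (-r) % (s : ℤ) = s - r % s := by
        have e : -r = (s - r % s) + s * (-(r / s) - 1) := by linear_combination b3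
        rw [e, Int.add_mul_emod_self_left]
        apply Int.emod_eq_of_lt <;> omega
      rw [this]; omega

set_option maxRecDepth 100000

open T

lemma full1 : Full 1 := by
  refine full_of (by norm_num) []
    (L 4227 E)
    (by decide +kernel) (by decide +kernel)

lemma full2 : Full 2 := by
  refine full_of (by norm_num) []
    (K 2 (L 5250 E))
    (by decide +kernel) (by decide +kernel)

lemma full3 : Full 3 := by
  refine full_of (by norm_num) [(1, 2410627)]
    (K 3 (L 38019 E))
    (by decide +kernel) (by decide +kernel)

lemma full4 : Full 4 := by
  refine full_of (by norm_num) []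
    (K 4 (L 38019 (K 2 E)))
    (by decide +kernel) (by decide +kernel)

lemma full5 : Full 5 := by
  refine full_of (by norm_num) []
    (K 5 (L 38019 (L 2806915 E)))
    (by decide +kernel) (by decide +kernel)

lemma full6 : Full 6 := by
  refine full_of (by norm_num) []
    (K 6 (L 38019 (K 2 (K 3 E))))
    (by decide +kernel) (by decide +kernel)

lemma full7 : Full 7 := by
  refine full_of (by norm_num) [(2, 148814295162994822)]
    (K 7 (L 38019 (L 789688517 (L 2806915 E))))
    (by decide +kernel) (by decide +kernel)

lemma full8 : Full 8 := by
  refine full_of (by norm_num) [(3, 35515908833414)]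
    (K 8 (L 38019 (K 2 (N 2 (L 179877986503 (L 46536836 E)) (K 4 E)))))
    (by decide +kernel) (by decide +kernel)

lemma full9 : Full 9 := by
  refine full_of (by norm_num) []
    (K 9 (L 38019 (L 11949859014 (K 3 (L 2806915 E)))))
    (by decide +kernel) (by decide +kernel)

lemma full10 : Full 10 := by
  refine full_of (by norm_num) [(3, 320029289620808177173777745033)]
    (K 10 (L 38019 (K 2 (N 2 (L 182025732295 (L 45426820 E)) (K 2 (K 5 E))))))
    (by decide +kernel) (by decide +kernel)

lemma full11 : Full 11 := by
  refine full_of (by norm_num) [(3, 41052919806212121351390159503496),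
    (4, 36091709210758)]
    (K 11 (L 38019 (L 12218360006 (N 2 (L 183099605191 (L 76892420 E)) (N 2 (L 150020 (L 46536836 E))
    (L 2806915 E))))))
    (by decide +kernel) (by decide +kernel)

lemma full12 : Full 12 := by
  refine full_of (by norm_num) [(5, 144419839856938120),
    (7, 2380575873160)]
    (K 12 (L 38019 (K 2 (K 3 (K 4 (N 5 (L 610949 (N 2 (L 750030981 (L 690643077 E)) (L 690626693 (L
    690634885 (N 2 (L 690651269 (L 2955163435208 E)) E))))) (K 6 E)))))))
    (by decide +kernel) (by decide +kernel)

lemma full13 : Full 13 := by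
  refine full_of (by norm_num) [(4, 41205781175509720090346558783624),
    (5, 1229689261192)]
    (K 13 (L 38019 (L 12486860998 (N 3 (L 158084 (N 2 (L 130453636 (L 185247350983 E)) (L 47655044
    E))) (N 2 (L 150020 (L 45426820 E)) (N 5 (L 610949 (N 2 (L 78002436 (L 422215813 E)) (L
    422199429 (L 422191237 (N 2 (L 422207621 (L 78002436 E)) E))))) (L 2806915 E)))))))
    (by decide +kernel) (by decide +kernel)

lemma full14 : Full 14 := by
  refine full_of (by norm_num) [(5, 73563724472064995491978)]
    (K 14 (L 38019 (K 2 (N 2 (L 186321223879 (N 5 (L 732971911360645 (L 351365 (L 44908599115977 (L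
    732989074460805 (L 741785167474821 E))))) E)) (K 2 (N 2 (N 5 (L 610949 (L 50020285150958174407
    (L 50164154063461793991 (L 50020038875385970887 (L 756560005 E))))) (L 46536836 E)) (K 2 (K 7
    E))))))))
    (by decide +kernel) (by decide +kernel)

lemma full15 : Full 15 := by
  refine full_of (by norm_num) [(4, 49087905861421713164734193871642505892308134328276615307)]
    (K 15 (L 38019 (L 12755361990 (K 3 (N 3 (L 2873473269960 (N 2 (N 2 (L 690102405 (L 690110597 E))
    (L 150020 E)) (L 723529861 E))) (K 5 (K 3 (L 2806915 E))))))))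
    (by decide +kernel) (by decide +kernel)

lemma full16 : Full 16 := by
  refine full_of (by norm_num) [(5, 651947874111171442952204319981706),
    (7, 2321385855112),
    (9, 2262951281197191),
    (25, 164404428935)]
    (K 16 (L 38019 (K 2 (N 2 (L 2882027946184 (N 3 (L 715427973 (L 158084 (N 5 (L 45046040690889 (L
    10868523142 (L 4998185606 (L 715107061747845 (L 35899716427910 E))))) E))) E)) (K 4 (N 2 (N 3 (L
    3019536105672 (N 5 (L 35861036048518 (L 747917445 (L 714033293709445 (L 610949 (L 10868506758
    E))))) (L 1849176453 E))) (L 45426820 E)) (K 2 (N 7 (L 643973 (N 3 (N 5 (L 758784133 (L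
    10868523142 (L 351365 (N 2 (L 12030337158 (L 708460677 E)) (N 2 (L 708460677 (L 10887151750 E))
    E))))) (L 93316 (L 691708037 E))) (N 3 (L 93316 (L 725229701 (N 5 (N 2 (L 691699845 (L 758673541
    E)) (L 10868523142 (L 351365 (N 2 (L 712213304049866 (L 691699845 E)) (L 691740805 E))))) E)))
    (L 691675269 (L 691683461 (N 3 (L 93316 (L 725237893 (N 5 (L 3045417189512 (L 691748997 (N 2 (L
    758673541 (L 691691653 E)) (L 10868523142 (L 351365 E))))) E))) (N 3 (L 691716229 (N 5 (L 351365
    (L 180707009236566220 (N 2 (L 708452485 (L 10887168134 E)) (L 758792325 (L 10868523142 E))))) (L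
    93316 E))) E))))))) (K 8 E)))))))))
    (by decide +kernel) (by decide +kernel)

lemma full17 : Full 17 := by
  refine full_of (by norm_num) [(5, 9818725780137570402440),
    (6, 23961032385167645378925270204400795915),
    (7, 1202515727455267785004637310189688440619241993415557777756850135738986376480185391025943637767735868061852369042),
    (11, 2389093712008)]
    (K 17 (L 38019 (L 190070177991 (N 5 (L 45114761478345 (L 2828874373 (N 2 (L 2890618142920 (L
    1069616857223 E)) (N 2 (L 1073911824519 (L 2890618142920 E)) (L 758132869 E))))) (N 3 (L
    2890653925576 (L 79795692678 (L 47655044 E))) (N 2 (N 3 (L 3036716368072 (L 1763750277 (L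
    775434373 E))) (L 76892420 E)) (N 5 (L 45115164131529 (N 2 (L 46536836 (L 2421555189813765 E))
    (L 2827833989 (L 756560005 (N 11 (N 2 (L 607238865415 (L 46536836 E)) (N 2 (L 46536836 (L
    76646216976317415687 E)) (L 3423815148639019961876681 (L 51041273991408959687 (N 2 (L
    19551371398 (L 46536836 E)) (L 12220129414 (L 51041282786965110983 (L 3423815157646184856879305
    (L 712761732104394 (N 2 (L 46536836 (L 76646216976317415687 E)) (L 1418630 E))))))))))) E)))))
    (N 7 (L 643973 (N 2 (L 620855196556337670 (L 791187589 E)) (L 51033392623312224455 (N 3 (L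
    13688538229927221493960 (L 110324100 (N 2 (L 976896133 (L 724070533 E)) E))) (N 3 (L 110324100
    (N 2 (L 976887941 (L 724070533 E)) (L 13688538511397903237320 E))) (L 51033401418868375751 (N 2
    (L 13061349212891776254152 (L 620854921745539590 E)) E))))))) (L 2806915 E)))))))))
    (by decide +kernel) (by decide +kernel)

lemma full18 : Full 18 := by
  refine full_of (by norm_num) [(5, 3048595651788566229667221503003598591584646995599917465430813213826097340264801318686296167569482981393820881466602738644525227495329978400405),
    (7, 829525366183608682693001356),
    (11, 77579162385148776055740813),
    (13, 1895260095967200904),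
    (25, 2414930493576)]
    (K 18 (L 38019 (K 2 (K 3 (K 2 (N 5 (L 610949 (N 7 (N 3 (L 290228293765 (L 194439594119 (N 2 (L
    144473105251467400 (L 181211362751185032 E)) E))) (N 2 (L 307374600325 (L 713315011395786 E)) (L
    1292422 (N 3 (L 290228326533 (L 333144412293 (N 2 (L 307374608517 (L 313702056757881104056455
    E)) E))) (L 2756379410568 (L 2764969148552 (N 2 (L 298801451141 (N 2 (L 307374657669 (L
    45183745982665 E)) E)) E))))))) (N 2 (N 7 (L 290194739333 (N 2 (L 45183745982665 (L 290194780293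
    E)) (L 290194747525 (L 1292422 (L 46455070458057 (N 2 (L 45183745982665 (L 144830451620675720
    E)) (L 2756379213960 E))))))) (L 12102688902 E)) (N 7 (N 3 (L 4801235224345702367368 (N 2 (L
    204254298247 (L 40918897630963853645305401049292 E)) (L 298784698501 E))) (N 3 (L
    199463294132989721010855739595 (N 2 (L 11415179508318411 (L 766791813 E)) (L 194439594119 E)))
    (L 298784665733 (L 1292422 (L 2756379279496 (N 3 (L 148208142751334536 (L 47657661300937 (N 2 (L
    46455070458057 (L 853613816686759093813509554308007854284 E)) E))) (N 11 (L 713585834721482 (N 2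
    (L 453100933903185346762 (L 504302586406988800299633004045140171 E)) (L 4947079 (L
    18318150164614 (N 3 (N 2 (L 159829924739133505906681577675 (L 204254298247 E)) (L
    859678409449639443442794179764414316748 (L 298784706693 E))) (N 3 (L 298784706693 (N 2 (L
    723485465641162 (L 204254298247 E)) (L 7121506410522193756296 E))) (L 18043348492422 (N 3 (L
    343315094754202896285074739382856974540 (N 2 (L 324571246725 (L 3053896630472 E)) (L
    298784706693 E))) (N 3 (L 298784706693 (N 2 (L 204254298247 (L 195089875079 E)) (L
    50886804104224758880297143501004 E))) (L 18043348476038 (N 2 (L 18043348525190 (L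
    184891238465429638 E)) E))))))))))) E))))))) (N 7 (L 1292422 (N 2 (L 290211573893 (L 750030981
    E)) (L 401863946373 (N 2 (L 181492832828358792 (L 750030981 E)) (L 2764969214088 (L
    2756379345032 (N 2 (L 750030981 (L 713315011395786 E)) E))))))) E))))) (K 6 (N 5 (N 7 (L 643973
    (N 2 (L 12643770502 (L 46420969717961 E)) (N 2 (L 46420969717961 (L 3043271585671460157915340
    E)) (L 643723276421 (L 2764969214088 (L 2756379345032 (N 2 (L 46420969717961 (L 643739963525 E))
    E))))))) (L 613509 (N 7 (N 3 (L 566413799557 (N 2 (L 608263165434630886244487 (L 566413791365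
    E)) (L 600807067781 E))) (L 643973 (N 2 (L 575003725957 (L 12643770502 E)) (L 2756379410568 (L
    2764969148552 (N 3 (L 566447329413 (L 11338186850304203 (N 2 (L 151879412076347528 (L
    3085775478090672330244300 E)) E))) (N 2 (N 2 (L 617953398917 (L 732188805 E)) (L 566430544005
    E)) E))))))) (N 7 (N 11 (N 3 (L 600773505157 (N 2 (L 180759957551448268 (L 12241133702 E)) (L
    41097144325783568549880734941388 E))) (N 3 (L 621716219489995680303644808 (L 600773505157 (N 2
    (L 180759957551448268 (L 9549841433033388916872 E)) E))) (L 35686993387654 (N 2 (L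
    758338309896526627018 (L 836609982886637326202038460777758923 E)) (L 41429364662406 (L
    35961871294598 (L 12156166278 (N 2 (L 784597157046303484033237194 (L 36511627108486 E)) (N 3 (L
    621716219489937964742541448 (N 2 (L 715427973 (L 575020519557 E)) (L 600773505157 E))) (L
    1418630 (N 3 (L 11898799640244807368840 (L 600773505157 (N 2 (L 11494348659359947 (L
    180759957551448268 E)) E))) E))))))))))) (N 3 (L 782553221 (N 2 (L 760476678990314829037703 (L
    782528645 E)) (L 145317525667610760 E))) (N 3 (L 46271681683521618055 (N 2 (L 45184023855305 (L
    193999290503 E)) (L 11338186850304203 E))) (N 3 (L 609363439749 (L 10100250906924323111112 (N 2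
    (L 180759957551448268 (L 11875453516350876745864 E)) E))) (L 2756379213960 (L 643973 (L
    575003701381 E))))))) (N 2 (N 7 (N 2 (L 144473109326626952 (L 732188805 E)) (L 643973 (N 2 (L
    626543317125 (L 732188805 E)) (L 592183578757 (L 566413774981 (L 2756379279496 (L 782528645
    E))))))) (L 713588777812170 E)) E))))) (K 2 (K 9 E))))))))))
    (by decide +kernel) (by decide +kernel)

lemma full19 : Full 19 := by
  refine full_of (by norm_num) [(5, 1043121582746339220805997491680996870999107875562183898801241451938438539134888010079562367119),
    (6, 124579872769779284064963041362312),
    (7, 9721480567221518473),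
    (8, 2280610622308487),
    (11, 154941022023190378453309837),
    (25, 163913695367),
    (31, 590882242165365538954)]
    (K 19 (L 38019 (L 192217792711 (N 5 (L 45252203053257 (N 2 (L 156572986449187040911796863111 (L
    2907798536392 E)) (N 2 (L 2907798536392 (L 1295544581 E)) (L 3475182537863 (L 749490309 E)))))
    (N 3 (L 2907834581192 (N 2 (L 724070533 (L 150020 E)) (L 110586244 E))) (N 3 (N 2 (L
    3071076892872 (N 2 (L 20892901638 (L 4372480229511 E)) E)) (L 79795692678 (L 723529861 E))) (N 5
    (L 45252605706441 (L 613509 (N 7 (L 781463685 (L 714136093327562 (L 2440288163616088941134028 (L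
    3901608837 (N 2 (L 476614177113518760557117771785 (L 45426820 E)) (N 2 (L 45426820 (L
    2422998098809349 E)) (N 2 (L 21233705222 (L 45426820 E)) E))))))) (L 747917445 (N 7 (N 2 (L
    21233705222 (L 45426820 E)) (L 781463685 (L 714136093327562 (N 2 (L 45426820 (L
    7602274882807136585 E)) (L 3901608837 (L 144832916990722184 (N 2 (L 5006227809526445774226439 (L
    45426820 E)) E))))))) E))))) (N 2 (N 3 (L 45252744904905 (L 1772409221 (N 5 (N 2 (L 12371140742
    (L 2272177886150791 E)) (L 46558409982153 (L 11565949062 (L 4408532909949065 (L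
    180812751352365260 E))))) E))) (L 78002436 E)) (N 3 (N 2 (L 46558549180617 (L 766791813 E)) (L
    110324100 (N 2 (L 1260941573 (N 5 (N 2 (L 2336499959939207 (L 713863680884938 E)) (L 750030981
    (L 204271042695 (L 2837000837 (L 50510254506185 E))))) E)) E))) (L 2806915 E))))))))))
    (by decide +kernel) (by decide +kernel)

lemma full20 : Full 20 := by
  refine full_of (by norm_num) [(7, 681728662141784278632772373373374169228),
    (9, 748546760965670699145),
    (11, 9233119598644182153),
    (23, 663916593283210),
    (29, 146932674952537292)]
    (K 20 (L 38019 (K 2 (N 2 (L 2916388733128 (N 3 (N 5 (N 7 (L 11432771738403019 (L 145133831047 (L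
    183777399968669830 (L 714684242198730 (L 193915601031 (L 173317062791 (L 2263518200905863
    E))))))) (L 758673541 (L 785803816220734822572490954 (N 7 (L 12706440011014538815688745094 (L
    714684242198730 (L 52053825640156168327 (L 173317062791 (L 780662218817738 (L 11432771738403019
    (L 145133831047 E))))))) (L 45320923840713 E))))) (L 158084 (L 775434373 E))) E)) (K 4 (K 5 (K 2
    (N 2 (N 3 (L 45321465954505 (N 5 (N 7 (L 790122629 (L 10268642308346899982530969734 (L
    46267773245636018311 (L 173317062791 (L 194540322951 (L 182138126471 (L 643973 E))))))) (L
    756560005 (N 7 (L 643973 (L 790122629 (L 785806177691362210774646986 (L 11698831003222219 (L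
    173317062791 (L 194540322951 (L 2521835323342983 E))))))) (L 46695850246345 (L
    181384875476033670 E))))) (L 3764715159687 E))) (L 46536836 E)) (K 4 (N 3 (L 158852 (N 3 (N 2 (N
    5 (L 180847922903515340 (L 714688299925706 (N 11 (L 10827088006 (N 7 (L 195664724103 (L
    10239774358765771 (L 2371820705628295 (L 173317062791 (L 10827284614 (L 2340998 (L 11696357510
    E))))))) (N 19 (L 192275366023 (L 156434567 (L 46285228789144256647 (L
    12463357760801930383319990407 (L 2271971754770567 (L 172426985607 (L 186477422773272780 (L
    10677380007592139 (L 37566365454007566471 (L 2833822800461959 (L 172759253127 (L 172759220359 (L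
    2825026170568839 (L 37566365454544470151 (L 2271980868927623 (L 11346979724722379 (L
    144763125047263368 (L 2263175661748359 (L 159984763720370003015507378379 E))))))))))))))))))) (L
    1418630 (L 12224432932389067 (L 46717574331089633415 (L 10827104390 (L 10827120774 (L
    10961305734 (L 10961322118 (L 10827137158 E))))))))))) (L 10891198598 (L 204254298247 E))))) (L
    11025285254 E)) (L 10891051142 (N 2 (N 5 (N 11 (L 10827120774 (L 10961305734 (L 10891395206 (L
    10827137158 (L 10827088006 (L 191370018951 (L 199618188897398218068660060363 (L 1418630 (N 7 (L
    10827530374 (L 2340998 (L 2272314800914567 (L 11872589295386827 (L 11632394374 (L 10891247750 (L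
    173317062791 E))))))) (N 19 (L 11346979724722379 (L 601974328236091375818 (L 2263175661650055 (L
    630913497698506131499909322 (L 192275366023 (L 156434567 (L 3076170875016 (L
    46717864924281880711 (L 2271971754672263 (L 173500694663 (L 46281991818334732423 (L
    10679579009876171 (L 46425957799502577799 (L 166797527317217480 (L 172759253127 (L 172759220359
    (L 166797527317151944 (L 2841705044158982936906742821268897879294155 (L
    3045927957412054334177484 E))))))))))))))))))) (L 10827104390 E))))))))))) (L 12034547846 (L
    204254298247 (L 180847922903515340 (L 11427938438 E))))) (L 10891100294 E)) E))) (N 11 (N 2 (L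
    12232761478 (L 10827137158 E)) (L 10827104390 (L 10827153542 (N 2 (L 10827268230 (L
    725682621645002 E)) (L 11095523462 (L 11095539846 (N 3 (L 11900846214 (N 2 (L 10827251846 (L
    11025268870 E)) (L 10891067526 E))) (L 10827169926 (L 10827088006 (N 3 (N 2 (L 10827120774 (L
    10891083910 E)) (L 10827366534 (L 10891067526 E))) (L 1418630 E))))))))))) E))) (K 10
    E)))))))))))
    (by decide +kernel) (by decide +kernel)

lemma full21 : Full 21 := by
  refine full_of (by norm_num) [(8, 2455810996554488684085385),
    (13, 598464857920650),
    (17, 39868709339273),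
    (29, 146317446718006476)]
    (K 21 (L 38019 (L 194365407431 (K 3 (N 2 (L 150020 (N 3 (L 715427973 (L 2925015236808 (N 5 (L
    45424138584265 (L 613509 (L 732740763005061 (L 741502529843333 (L 11443752785412299 E))))) E)))
    E)) (N 5 (L 610949 (L 748433541 (N 2 (N 2 (L 315962970245 (L 45389907558601 E)) (L 2318024837
    E)) (N 2 (L 2318016645 (N 2 (L 45389907558601 (L 307373035653 E)) E)) (N 2 (N 2 (L
    45389907558601 (L 172767641735 E)) (L 1197192533034279942 E)) E))))) (K 3 (K 7 (N 7 (L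
    714961808130250 (N 2 (N 2 (L 180865515064393932 (N 13 (L 10965516422 (L 10831282310 (L
    11233935494 (L 10831315078 (L 10831380614 (L 1484422 (L 10831396998 (L 10831331462 (L
    11233951878 (L 10831298694 (L 10965500038 (N 2 (L 10888953990 (L 10831511686 E)) (N 2 (L
    10889347206 (L 10888953990 E)) E))))))))))))) E)) (L 1319399685 E)) (N 5 (L 2827833989 (N 2 (N
    13 (L 10965500038 (L 10965631110 (L 10831577222 (L 10831429766 (L 10831331462 (L 10831315078 (L
    10831413382 (L 10831593606 (L 10965647494 (L 10965516422 (L 10831298694 (L 1484422 (L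
    10831282310 E))))))))))))) (L 1295646701424901 E)) (N 2 (L 1155530850439 (N 3 (N 11 (L
    173325484167 (L 148898513031 (L 173325451399 (L 726784017825994 (L 738326474260682 (L
    12230697094 (L 2301317752078471 (L 12172992646 (N 2 (L 172767641735 (L 774191421084636807370 E))
    (N 2 (L 2263322204520583 (L 172767641735 E)) (L 2263659359420551 E))))))))))) (L
    180883107338518732 (L 204254298247 E))) E)) (N 2 (N 2 (N 13 (L 10831380614 (L 10831298694 (L
    10831282310 (L 10831396998 (N 2 (L 10831511686 (L 10888953990 E)) (L 10831315078 (L 11233951878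
    (L 10965516422 (L 1484422 (L 10965500038 (L 11233935494 (L 10831331462 (N 2 (L 10889347206 (L
    10888953990 E)) E))))))))))))) (L 172767608967 E)) (L 1278054515364101 E)) (N 2 (L
    726781591158986 (N 13 (L 11368169606 (L 11368185990 (L 12039241862 (L 10965516422 (L 10831298694
    (L 1484422 (L 10831282310 (L 10965500038 (L 12039258246 (L 11368202374 (L 11368153222 (L
    10831331462 (L 10831315078 E))))))))))))) E)) E))))) (N 5 (N 2 (N 2 (N 13 (L 10831331462 (N 2 (L
    10889347206 (L 10888953990 E)) (L 10831380614 (L 10831298694 (L 10831282310 (L 10831396998 (N 2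
    (L 10888953990 (L 10831511686 E)) (L 10831315078 (L 11233951878 (L 10965516422 (L 1484422 (L
    10965500038 (L 11233935494 E))))))))))))) (L 202106781831 E)) (L 1286859299000581 E)) (N 2 (L
    726781591158986 (N 2 (L 202106781831 (L 2272114002411655 E)) E)) (L 2827833989 (N 3 (L
    11425374342 (N 2 (L 738328878907594 (L 1252299013 E)) (L 2839477035024519 E))) (N 2 (N 2 (L
    172767641735 (L 202106781831 E)) (L 1155530850439 E)) E))))) (L 11693744262 (N 2 (L 12575596678
    (N 2 (L 594949 (L 1269059845 E)) E)) (N 2 (N 2 (L 1269059845 (L 594949 E)) (L 11349186173468875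
    E)) E))))))) (K 3 (L 2806915 E)))))))))))
    (by decide +kernel) (by decide +kernel)

lemma full22 : Full 22 := by
  refine full_of (by norm_num) [(7, 3957288074678466258332863080223449176525710977293432794887671919961801203979305362828612672548197623150413375204384484845783125325098372008449129439773454217598412798566650778),
    (9, 624198067722384904122794122),
    (13, 161476243737459833302375989387),
    (17, 158015777230920222857)]
    (K 22 (L 38019 (K 2 (N 2 (L 2933569126600 (N 3 (N 7 (L 733840829329541 (L 715783761166538 (L
    733797946790021 (L 172775997575 (L 76414387079 (L 716214359052421 (L 2274238507597959 E)))))))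
    (L 158084 (L 766791813 E))) E)) (K 2 (N 5 (L 610949 (N 3 (L 1797922949 (N 2 (L 46970450804937 (L
    3123894634854881771978953 E)) (N 7 (N 2 (L 787013896398796735038488778 (L
    787013896398784915300024522 E)) (N 13 (N 2 (L 11450325129232587 (L
    199734087355303340925056712907 E)) (L 826063121378012660950139080 (N 3 (L 156717064817213640 (N
    2 (L 11353592916869323 (L 2968981241992 E)) (N 2 (L 11847818556901330944136 (L
    610550990639491715285127 E)) E))) (N 2 (L 3546558614441336839578984472778604744 (L
    145392826182795400 E)) (L 3694131136226071584069329484047435794481355 (L 144903550974099592 (N 2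
    (L 2705998940312457254594605778112479367 (L 9964579452518870764564316295 E)) (N 3 (L
    43050170240401652842699 (L 156717064817213640 (N 2 (L 11353592916869323 (L 199791526023 E)) E)))
    (N 2 (L 145392826184368264 (L 597937962547617489030 E)) (N 2 (L 602550773916397281414 (L
    214763201111496665608648866235744457 E)) (L
    54206251352709770854847268035079261969662792105765710724443790115020 (L 113965950598 (L
    144548409843253384 E))))))))))))) (N 2 (L 11549305894338763 (L 11695874182 E)) (N 2 (L
    727879462813898 (L 2371270408749191 E)) (N 2 (L 9964579452518844370916540551 (L
    199734087355444885454693073099 E)) (L 2340998 (L 172775997575 E))))))) E))) (N 2 (L 12098510982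
    (N 7 (L 787013820017747329781989578 (L 12575596678 (L 3049728868488 (L 2340998 (N 3 (L
    14333807552892850394210462763933657113579487436 (L 3126255421781061214470345 (L 1764368517 E)))
    (N 2 (L 180918274501378252 (L 3126256619737050254868681 E)) (L 199772772575703897278062526667
    E))))))) E)) (N 3 (N 2 (L 3123894238539626391732425 (L 46970450804937 E)) (N 2 (L
    43994814654484500522040926063382690300039 (L 204271042695 E)) (L 1764376709 E))) (N 3 (L
    1797931141 (N 2 (L 12038807686 (L 46970450804937 E)) (N 2 (N 7 (L 727879462813898 (L 2340998 (L
    786711664943881258006610122 (L 11695874182 (L 41182642210328313991 (L 172775997575 (L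
    724285509616455984896752833946791575754 E))))))) (L 11452548894163147 E)) E))) E))))) (K 2 (N 2
    (N 5 (L 46970730774729 (N 3 (L 3754462085255 (L 715511019208906 (N 7 (L
    787015064021164331975442634 (L 2272249387008135 (L 3126274264913782967959753 (L 643973 (L
    781463685 (L 2263449396658311 (L 172776030343 E))))))) E))) (L 2855875205 (N 3 (L
    715511019208906 (L 824932771207521748544065717272778 (L 3754462052487 E))) (L 747917445 E)))))
    (L 45426820 E)) (K 2 (N 3 (L 158852 (N 7 (N 2 (L 2263449954893959 (L 791187589 E)) (N 5 (N 2 (L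
    46561390881878917255 (L 187506507911 E)) (L 622318206086619844380295304 (L
    684178775492479239162712541902852325580 (N 2 (L 12421207181096918340344037511 (L
    46705506069954740359 E)) (L 4408570692108425 E))))) (N 2 (L 186432831623 (L 727606732390602 E))
    (N 5 (N 2 (L 715787016995018 (L 50788504212854278233363799244936 E)) (L
    45407266163826608471338249339287834722505 (N 13 (N 3 (N 2 (L 180900527604236492 (L 190727635079
    E)) (L 144838680777982088 (L 144613284335124616 E))) (N 2 (L 608245699035172724870 (L
    12537318809287402170823524487 E)) (L 776180049600582586562871432 (L
    67682934480443358919157263083912446193067156391878780451447277879500 (L 156370719644319944 (N 2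
    (L 12421230793073447876645961863 (L
    3248597266318790623716722580927549277974654638419870560026828 E)) (N 2 (L 169110570775609544 (L
    3328475491166130053287713376829538440 E)) (L 51759976449716359403184424124552 (L
    679236578891923194058 (N 2 (L 603628384067034062982 (L 43465487595418758938827 E)) (N 2 (L
    12492791942 (L 209602676397203590 E)) (N 3 (N 2 (L 615554533743893980168327 (L
    46705154243950592135 E)) (N 2 (L 187110788320198860 (L 190727635079 E)) (L 144838680777982088
    E))) (L 1484422 E))))))))))))) (L 4408570692108425 (N 2 (L 50946959328915719838566688555144 (L
    187506507911 E)) E))))) (L 172775997575 (N 5 (N 2 (L 741879925198981 (L 180900716767346892 E))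
    (N 2 (L 715397257515141 (L 732980853624965 E)) (L 4408570692108425 (N 2 (L 187506507911 (L
    741776946638981 E)) (N 2 (L 715787016995018 (L 182588225324359814 E)) E))))) (L
    3087430893848494219 E))))))) (N 2 (L 724070533 (N 5 (L 759386203508869 (L 750590110478469 (L
    759369040408709 (L 4408570692239497 (L 739978151592138 E))))) E)) E))) (K 2 (K 11 E))))))))))))
    (by decide +kernel) (by decide +kernel)

lemma full23 : Full 23 := by
  refine full_of (by norm_num) [(6, 2256860741086635652556156304709672589795062637882884509350737718316943070923356043039216286877363998292286674634311223991983944825633262081008700795024791315300778383067931981553510972824166369689523315751915127227438695313787672571814756207311866074069035484085064812961867114975223542559568425111266405158440473580258415628192931613414537896128635393769210896220185),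
    (7, 14663120335741953348827844500349478866814527910713398254936949188520305747124022608904768343804898449046862588394355347064286391821390923142018831654782980163867287671792841219025624465342607540989453836402755157371785937069371779567785297883423580356762),
    (8, 13810233914476797409110113765250265960614594206116979434885292773867662),
    (10, 73129548713097),
    (19, 41727960940681)]
    (K 23 (L 38019 (L 196513022151 (N 2 (L 2942159323336 (N 3 (L 1160140475760901 (L 158084 (L
    1303662853 E))) E)) (N 2 (L 150020 (N 3 (L 1772409221 (L 45527208362185 (N 7 (L 3902657413 (N 2
    (L 865994841082873311824744082054420234442 (L 2839751447265415 E)) (L 47638754722355621396683 (N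
    2 (L 202106781831 (L 865994811926909506575467822341479071946 E)) (L 791695493 (L 716059179614410
    (L 11459150419329227 E))))))) E))) E)) (N 5 (L 610949 (N 2 (L 1244274821 (L
    13503786219135360008392 E)) (L 52758385704413085895 (L 52758376908856934599 (N 2 (L
    13503785937664678265032 (L 1244283013 E)) E))))) (N 3 (L 48722932334793 (N 5 (L 757092485 (N 7
    (L 3945378693 (L 790638725 (L 180935776888422604 (L 716335131263178 (N 2 (L 2942259986632 (N 2
    (L 180935883926012108 (L 181420026228678790 E)) E)) (N 2 (L
    951807417496132216566314533161079507916857340723402 (L 2942259986632 E)) (L 2839751342211207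
    E))))))) (N 7 (L 716335131263178 (N 2 (L 2942259986632 (N 2 (L 749564927670187217029 (L
    180935883926012108 E)) E)) (N 2 (L
    59464691328003771063279907778489002388330458717689593530838823153789937727438984 (L
    2942259986632 E)) (L 2839751342211207 (L 3945378693 (L 790638725 (N 2 (L 193965703303 (L
    2942259986632 E)) E))))))) (L 45527488856265 (L 4390978506195081 E))))) (L 723529861 E))) (N 2
    (N 3 (L 716060778168522 (N 7 (L 57999558135197321785043603652808 (L 2839751392542855 (L 643973
    (L 54355117061203044914255304163528 (L 57999556926289948633017456754888 (L 11636252806 (L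
    12655523943046849462472 E))))))) (L 79795692678 E))) (L 76892420 E)) (N 2 (N 2 (L 594949 (L
    3144190492872 E)) (L 46536836 E)) (N 5 (L 715113143488645 (N 3 (L 715138955235461 (L 158852 (L
    750297515610245 E))) (L 2827833989 (N 2 (L 37855748614 (L 732705329549445 E)) (L 715104561942661
    E))))) (N 3 (N 7 (L 741351168278730 (N 3 (N 2 (L 775434373 (L 18173206462600 E)) (L
    3347720195736578713493638 (L 716062424957130 E))) (L 751283321869876875397 (L 3910783877 (L
    751292337856626315397 (N 2 (L 775434373 (L 310215049479 E)) (L 788185826004045451397 E))))))) (L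
    110324100 (N 7 (L 3910783877 (L 751292329069123227781 (N 2 (L 38396944902 (L
    769739073142832795781 E)) (L 47638808765551149842635 (N 2 (L 2503839626692179349979791946 (L
    751310352255152574597 E)) (N 2 (L 769730074731089531013 (L 310215016711 E)) (L
    751283330657379963013 E))))))) E))) (L 2806915 E))))))))))))
    (by decide +kernel) (by decide +kernel)

lemma full25 : Full 25 := by
  refine full_of (by norm_num) [(7, 5066151734181040214980124750015554848710936985075911298357660627515067648395489367703990876790173638369326156597565704366006546272611282740541671971341303575234945801134375759546159824093027760912706316294947069989573302353812974612573500569770311414223252191781271299315332670862484934409059472385369488129160513520041216461271989818825606476295039995177100709052358366699855044770196666796525449744015112646077263483271283534866487534331873930693382253974845594925226967796376666168271176621044711925807726929740605493678996406995476948713114485552273964429665208682706744193977921078594170457062725660226466805107099973657856470823135920035981073869974912228409948351260412720853763463333558480839585488610987887244233197475973352742826558027630014450892069340662587506002910973967132774383630469806751756380020850875),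
    (8, 11440298290691572581199156802965865238893691020),
    (9, 47443731045083283909920746298855372798360861642451259951509667987),
    (11, 9244065752268800137),
    (14, 4648613957949855881),
    (29, 674368667779210)]
    (K 25 (L 38019 (L 198660636871 (N 2 (L 2959339716808 (N 3 (L 1160140475760901 (L 158084 (L
    1160140475760901 E))) E)) (N 2 (L 150020 (N 3 (N 5 (L 181023845078532300 (N 13 (L
    2265581510246535 (L 181472862583955590 (L 12426698886 (N 2 (L 50953622868103818281839966552268
    (L 50953622868398966204611505422540 E)) (N 7 (L 783036549 (L 62428242822 (L
    11833325986381560289287171067129426732065078902987 (L 751995399538307760330 (L 717158698582218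
    (L 12306719498703349743752 (L 3233689250318831881715775838205182576384135693325952852426956
    E))))))) (L 182765471287214284 (L 173359005831 (N 7 (L 717158698582218 (L 2273005301252231 (N 2
    (L 201582657671 (L 50953622809369381650303731368140 E)) (L 783036549 (L 62428242822 (N 2 (L
    2274340513054855 (L 2276608117342343 E)) (L 3037072539237107711869132 E))))))) (L
    11368959162187979 (L 151079682183 (N 7 (L 62428242822 (N 2 (L 2276608117342343 (L
    2274340513054855 E)) (L 3044609428141370248306822 (L 717158698582218 (L
    3110863130726178045821132 (L 3044609427015745219371142 (L 783036549 E))))))) (N 7 (L 783036549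
    (L 62428242822 (N 2 (L 2276608117342343 (L 2274340513054855 E)) (L 3037072539237107710820556 (L
    717158698582218 (L 2264209208230023 (L 269828515909207889311317151060841125706941456737370316
    E))))))) (L 173359038599 E))))))))))))) (N 13 (L 11368959162187979 (L 151079682183 (L
    208174072276648022956095929903919422339185382079292504393384139 (L 2273004650315911 (L
    173359038599 (L 2265581510246535 (L 181472862583955590 (L 12426698886 (L 46273456207239872647 (L
    2821284767714786571129899663435240000979147 (L 182765471287214284 (L 173359005831 (L
    2264208557293703 E))))))))))))) (L 749490309 (L 45699021734089 E))))) (L 45664648888521 (L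
    1849176453 E))) E)) (K 5 (N 3 (L 49135250768073 (N 2 (N 5 (L 748433541 (L 203713200263 (N 13 (L
    11368963457155275 (L 200004929710681924155755725003 (N 7 (L 2273006781022343 (L
    174750955500404105802221268095320107122824 (L 42047941403819327838982441009356 (L
    14754904239801762071561355511511566566410719330507 (L 3902124933 (L 717434650230986 (L 781996165
    E))))))) (N 2 (L 11824905990478154072200 (L 11824906271957425750152 E)) (L 12422504582 (L
    173359005831 (N 7 (N 2 (L 2687714478063815 (L 2698915605971143 E)) (L 3902124933 (L
    717434650230986 (L 781996165 (L 2273021813375111 (N 2 (L 11824903738643980648584 (L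
    182765488571941068 E)) (L 2496274941132935 E))))))) (L 199418396807 (L 18535560 (L
    2264206393032839 (N 7 (L 781996165 (L 2264225720352903 (L
    221949725126833760208289709678042955807731932173697228 (L 2496274941165703 (N 2 (L
    2687714478063815 (L 2698915605971143 E)) (L 3902124933 (L 717434650230986 E))))))) (L
    173359038599 (N 7 (L 3902124933 (L 717434650230986 (L 781996165 (L
    3518523868204754352593938924651909732892875 (L 3518523868204754391279555928948006468714699 (L
    3036928148133209819840716 (N 2 (L 2687714478063815 (L 2698915605971143 E)) E)))))))
    E))))))))))))) (N 13 (L 18535560 (L 2264206393032839 (L 2265858535669895 (L 173359038599 (L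
    11474779705238456942996450767173546550770073736 (L 11368963457155275 (L
    200004929710681924155755725003 (L 9965200740186325363432915079 (L 46268917424867836039 (L
    12422504582 (L 173359005831 (L 2265858535637127 (L 199418396807 E))))))))))))) (L 45664930431177
    E))))) (L 2959440380104 E)) (L 47655044 E))) (N 7 (L 643973 (N 3 (L 456794245 (L 1763750277 (N 2
    (L 21229576454 (L 423264389 E)) E))) (L 423248005 (N 2 (L 328121220777189638 (L 440017029 E)) (N
    2 (L 440025221 (L 328120945966391558 E)) (L 423239813 (N 3 (N 2 (L 423256197 (L
    301680169449095430 E)) (L 456802437 (L 1763750277 E))) E))))))) (N 2 (N 2 (L 594949 (L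
    3178550755528 E)) (L 45426820 E)) (N 2 (N 5 (L 717436300165322 (N 7 (N 2 (L
    3049657778321114592747654 (L 3049657777194939807998086 E)) (N 3 (L 158852 (L 181771569322827910
    (L 684677601103967357850879382169401163980 E))) (L 3046323159176 (N 3 (L 187401067447754886 (L
    158852 (L 2821971013955625966769508706607978911367371 E))) (L 730905278283978 (L 3901608837 (N 3
    (N 2 (L 206768523291082524964344037589127 (L 11631992966 E)) (L 158852 (L 12571467910 E)))
    E))))))) (N 3 (N 2 (L 12302966918 (N 13 (L 12511633542 (L 2264219902886023 (L
    11866913569827620814984 (N 7 (L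
    904956569277181819923997750152762122759712546587125247646882539765963 (L 730905278283978 (L
    3901608837 (L 12571467910 (L 783166158552135734440505949262791729718755530 (L 181771568987283590
    (L 181771843932299398 E))))))) (N 2 (L 12162062038128726278280 (L 3093685239944 E)) (L
    151079682183 (L 220607521514036734169659250534226422431880 (L 2478268290744455 (N 7 (L
    3901608837 (L 12571467910 (L 999781361708891349402018958329189203127640590687926878410 (L
    721865131118263470194887 (L 11830023139262285840520 (L
    14480024727053760838092611851646525875457458312 (L 730905278283978 E))))))) (L 12437217414 (L
    173359005831 (L 11959147290196168638600 (L 181006080884080844 E))))))))))))) E)) (L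
    11368983910154443 (L 158852 E))) (L 12034547846 (N 3 (N 3 (L
    223923819047577293975316796077965513 (L 3138100087063677202137289 (L
    215810731412110336075454899619561673 E))) (L 158852 (N 3 (L 223923819666547313618006899167789257
    (L 215810732031080355718145002709385417 (L 11900362886 E))) E))) E))))) (L 78002436 E)) (K 5 (N
    3 (N 2 (N 2 (L 11368974168359115 (N 7 (L 6729988230 (L 610864193479578774175879 (N 11 (L
    51448815646742520958826164256972 (L 50953639232578720606191359623372 (L 2467206 (L 3029076181128
    (L 51443863886585379437726568808652 (L 51196275878728303382768480944332 (N 2 (L 2272663225647239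
    (L 617855565385440491094151 E)) (L 12164587654 (L 50948693988988550910869540176076 (L
    3585903067471626489806574730606611780075723 (N 13 (L 11368979562758347 (L 11478925357351115 (L
    199250493575 (L 2273003128537223 (L 50953639262093509364908038815948 (L 145968978865881224 (L
    613140942673286503940231 (L 4056186865421613250918599141502874684440224474497160050114764 (L
    50948754273246939856221492478156 (L 51201227638885444904082458804428 (L 144903555470655624 (L
    173359038599 (L 151079682183 E))))))))))))) E))))))))))) (L 11588876546343115 (L 11627733126 (N
    3 (L 3046434568885957051850886 (L 184959347993895046 (L 730906378240202 E))) (N 3 (L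
    603773519077720498310 (L 730906378240202 (L 144848572138717320 E))) E))))))) E)) (L 1312305413
    E)) (L 110324100 (N 5 (N 11 (N 2 (L 12164587654 (L 33041186950 E)) (N 2 (L
    3110860885488230480740556 (N 2 (L 223925025414098605743732747292573897 (L
    223925025414100966917966982860439753 E)) E)) (L 11588881835884747 (L 3032783945864 (N 2 (N 2 (L
    215811999056665953662446562751742153 (L 215811999056668314836680798319608009 E)) (L
    307734920987230880775 E)) (L 2467206 (N 2 (N 2 (L 215811999675635973305136665841565897 (L
    215811999675638334479370901409431753 E)) (L 307734912191674729479 E)) (N 2 (L 32504316038 (N 3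
    (L 183830150021947526 (L 3084190443443622270541958 (L 3046374616966342368075910 E))) E)) (N 7 (N
    2 (L 3140478825248464835510473 (L 32442433670 E)) (L 788830781362952431981953226 (L
    9968210970804199035060158599 (L 44010807049928787320999274842468957323399 (N 2 (L 11627733126 (L
    32442499206 E)) (N 2 (L 32442450054 (L 3140478825248464835379401 E)) (L 799902048583882 E)))))))
    (N 2 (L 305429069182460511239 (N 2 (L 223925024795130947275276879770616009 (L
    223925024795128586101042644202750153 E)) E)) (N 2 (N 2 (L 223924962898128983006259698840568009
    (L 223924962898126621832025463272702153 E)) (L 33041170566 E)) E))))))))))) (N 2 (L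
    2566404817054226990318223946 (L 717162496000202 E)) (L 188039086215 (N 2 (L 1295544581 (N 7 (L
    11627733126 (N 2 (L 758394142720202 (L 166513247189241364176988293759111 E)) (L
    3138141592149848369070281 (L 854777236053298344332451001340210446540 (L 6729988230 (L
    181006313284174028 (L 3140502775391283191808201 E))))))) E)) (L 11366780591931595 E))))) E))) (L
    2806915 E)))))))))))))
    (by decide +kernel) (by decide +kernel)

lemma full26 : Full 26 := by
  refine full_of (by norm_num) [(7, 65331649240918518065171958719685034808785025332327240318176012169516189109906116114549292260847431363403542312774513073439028560922552913903072434037714745481891543391814174868714045424510354584729792364000107218996408294269748293324190283232755705426216070744217968909408886066326772258897791762839640609275887855448913928253270243358627237842928248169988321499968982578089049372942785049404666262609116297993472313827400098676969634823147691),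
    (9, 10391573999614900646662413526068365),
    (11, 451091585981300707175859793511134289828736335550031014736030041565108007373994894772362801053848),
    (15, 2299523011739783),
    (19, 2770123906070415752),
    (23, 664215898816650)]
    (K 26 (L 38019 (K 2 (N 2 (L 2967929913544 (N 5 (L 12098510982 (N 7 (L 11695874182 (N 3 (N 3 (L
    725063228756631224522 (N 7 (L 10417556447927437523173745433247949 (L 144825478518472840 (L
    144925541139546248 (L 144825478523977864 (L 144544012133335176 (N 2 (L 147177365640937608 (L
    35622645522566 E)) (N 2 (L 35622645522566 (L 149147690477912200 E)) E))))))) (L 35622645473414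
    E))) (L 181973766861488332 (L 158084 E))) (N 3 (L 50963523932194780980006228590796 (L 158084 (L
    50963523932489928902777767461068 E))) (L 1292422 (N 3 (L 144544009522675848 (L
    144825484499386504 (L 158084 E))) (N 3 (N 17 (L 2265407215157383 (L 752859531578254033098 (L
    145071299637706888 (L 2265407215190151 (L 2265407213879431 (L 190127849607 (L
    752859531578267402442 (L 2765506085000 (L 11945143105749195 (L 2265407214010503 (L 138776713 (L
    11371156160643275 (L 3037367565149194574364876 (L 2274204380610695 (L 163179110791807112 (L
    2756916281480 (L 2756916084872 E))))))))))))))))) (L 158084 (L 144825493089517704 E))) (L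
    717982799102154 E))))))) (L 717707893932234 (L 2847232645 (N 7 (N 17 (N 3 (L 158084 (L
    2265407213879431 (L 2756916150408 E))) (L 138776713 (N 3 (L 2756916084872 (L 2274203306868871 (L
    158084 E))) (L 190127849607 (L 11371156160643275 (N 3 (L 47694087676898660319435 (L
    47703311048935515095243 (L 158084 E))) (L 47595747724337692807 (L 47451650135964041351 (N 23 (L
    51216110418874710832705966702796 (N 3 (L 200043496484498028757446820043 (L 2265406999756935 (L
    158084 E))) (L 3144218214536 (L 5720967 (L 41410647267914239428718489698440 (L
    37117017855008768135 (L 51221062179031852353805562151116 (L 42202939773389259336380926132360 (L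
    631876626732261823427477640 (L 51988585432828959972010129621196 (L
    50958619320143523583293622059212 (L 51221062593419486526187450663116 (L
    200044233173669356422345523403 (N 2 (L 51736045235079409835872533086412 (L
    651340935204568581980295 E)) (L 200044239408668281589909422283 (L 200082925034895949723500544203
    (N 3 (L 200082182101503125298893029579 (L 2265406998184071 (L 158084 E))) (L
    200082918799897024555936645323 (L 51216110833262345005087855214796 (L
    50963571080300665104393217507532 (L 51993537192986101493109725069516 (L
    41331438448249981850320487186568 (L 181041213607510220 E))))))))))))))))))))))) (L
    47595853271548379271 (L 47451738083472490631 (N 3 (L 2274204380741767 (L 145352748844679304 (L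
    158084 E))) (L 47595765324039929991 (L 47451632536261804167 (N 3 (L 47694087676898659795147 (L
    47703311048935514570955 (L 158084 E))) (N 3 (L 158084 (L 2265407214010503 (N 2 (L
    11988703708846751945 (L 752571398903133372618 E)) E))) (N 3 (N 2 (L 3037367586189448211071180 (L
    11988703708846751945 E)) (L 158084 (L 2756916281480 E))) E))))))))))))))))) (L 1292422 (N 2 (L
    181041437218439372 (N 3 (L 158084 (L 182888560481272012 (N 2 (L 752859686463767314634 (L
    11830059142 E)) E))) E)) (L 3045685559432 (L 717982799102154 (L 11695874182 (N 3 (L 158084 (N 23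
    (L 185615405317357772 (L 152186732027216008 (L 2276883523731591 (L 2274203091239047 (L
    147120182446424200 (L 2274203091697799 (L 2274203091107975 (L 5720967 (L 2274203091140743 (L
    3144218214536 (L 146838707469713544 (L 2274203091271815 (L 2274203090878599 (L
    151905257050505352 (L 163727206072352904 (L 181041213607510220 (L 2274203090911367 (L
    144825477650317448 (L 2274203091435655 (L 2274203091468423 (L 144825477650251912 (L
    2274203090944135 (L 144586907656028296 E))))))))))))))))))))))) (L 181973766861488332 E)))
    E))))))) E))))) E)) (K 2 (N 5 (L 610949 (L 422199429 (N 2 (L 422207621 (L 438976645 E)) (N 2 (L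
    438968453 (L 422215813 E)) (L 422191237 E))))) (K 2 (N 5 (N 2 (L 732003692576970 (N 3 (N 19 (N 2
    (L 789439688208194032084320458 (L 210141032421766122123923554507 E)) (L
    200082769602572407390095540427 (L 820569483099289172712751306 (L 11830760665514187 (L
    204106074730249893283626746059 (L 200082771991424735792599400651 (L
    200044086365197067659008278731 (L 204067389104022225150036672715 (L 804853507107986856805007562
    (L 820871714554192830006165706 (L 200044083976344739256505467083 (N 2 (L
    210102346795538453990333481163 (L 789137456753290374790906058 E)) (L
    204067391492874553552539484363 (L 61922617467378682679451277156010078337133287563312496843 (L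
    12749416957351226278088 (L 5458311 (L 12767863701424935764168 (L 38279236812256870535 (L
    204106077119102221686130606283 E))))))))))))))))))) (L 11373363719307467 (L 2844820545208457
    E))) E)) (N 7 (N 3 (L 5357773176150774514890 (L 193898561671 (N 2 (N 11 (L 181973857820213452 (L
    181973857820213452 (L 181973857820213452 (L 181973857820213452 (L 181973857820213452 (L
    182870934044541132 (L 181973857820213452 (L 11371220421574859 (L 181973857820213452 (L
    181973857820213452 (L 181973857820213452 E))))))))))) (L
    25148661110619795434013435171800122851528433049851396299 E)) E))) (N 3 (N 2 (L 717710055047370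
    (L 50958581766707470411599675130060 E)) (N 2 (L 181956140315705548 (N 2 (L
    3145163883882264931533001 (L 3145163883876904825979081 E)) E)) (L 5357773176150774777034 E))) (N
    2 (N 3 (L 163279437651105751883778296414343 (L
    954365760722760498968483387236424134720206100365514 (L 1496981637 E))) (L
    12747759632687968059592 E)) (N 3 (L 1530544261 (N 2 (L
    4078548277870986088746679550580865362038527037234286245183692 (L 717710055047370 E)) (N 11 (N 2
    (L 144609977141756040 (L 12751506627578812727496 E)) (N 2 (L
    3838407205559288747034767979976747709628619 (L
    4058147661944189831524009482176657339615646768270487900913868 E)) (N 2 (N 2 (L 12245393542 (L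
    3145164811618428050800841 E)) (L 182870934044541132 E)) (N 2 (L 194410426427313008973709517 (L
    241861065811461962678675728208964226151022666365534412 E)) (N 2 (L 181058840098767052 (L
    14760615953539303139233464325635157538944939983051 E)) (L 200043652396319361636172038347 (L
    19870299981193 (N 2 (L 3519902918721040025105497895872097100234955 (L
    3555274996317130749451032845687376811131083 E)) (N 2 (N 2 (L 3145164811618428050800841 (L
    3265583760817506238922953 E)) (L 937127350155998812204881903231349686474 E)) (N 2 (L
    885287442157841940251708544228880416970 (L 40846453614600747722329280413832 E)) (N 2 (L
    623267419619651597508345992 (L 42130228147233391444197118705800 E)) E))))))))))) E))) (L 643973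
    (N 3 (N 17 (N 2 (L 1069824711130265413770673108464501932005844422424203890914099402 (L
    3036894298248 E)) (N 11 (N 2 (L 182870934044541132 (L 33839557952233621972102345392264 E)) (N 2
    (N 2 (L 3267944944058941061398729 (L 3142803628376993228062921 E)) (L
    41417145181602615056847454929032 E)) (N 2 (L 194410426427313008973709517 (L
    620435975882358411244011656 E)) (N 2 (L 40925681777115012059922824429704 (L
    622059068642484575747113096 E)) (N 2 (L 2666528939310242460622005087577899144 (L
    181058840098767052 E)) (N 2 (N 2 (L 3267944944058941061398729 (L 3142803628376993228062921 E))
    (L 40767263122553888133815338139784 E)) (L 200082338022547029769762635979 (L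
    193909829063075756974801101 (L 19870299850121 (N 2 (L 30589036894080034715285969961096 (L
    622059068642484575748227208 E)) (N 2 (L 40704091718974236018505559376008 (L
    3555274996479390064965881660116926243537099 E)) E))))))))))) (N 7 (L
    14223647194982061400306330709796508728407488873543061651389407331694411981 (L
    219106009944389477122979137494606128840840 (L
    14223647194982061400306330709796508728407488873543061651389407331694411981 (L
    14223647194982061400306330709796508728407488873543061651389407331694411981 (L
    14223647194982061400306330709796508728407488873543061651389407331694411981 (L
    14223647194982061400306330709796508728407488873543061651389407331694411981 (L
    14223647194982061400306330709796508728407488873543061651389407331694411981 E))))))) (L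
    2756916150408 (L 2765506019464 (L 2756916215944 (N 2 (L 160487731316174005566462492875 (N 11 (L
    182870934044541132 (L 194410426427313008973709517 (L
    9067447254129775177483796421430046261688244371659 (L 3068065160587450616119500 (L 19870299850121
    (L 3519902918721040025105497895872097100234955 (L 1352078276332224099747035555880829064 (L
    30589039137241007847986419662984 (N 2 (L 629557596330478417190781064 (L 144789794646950024 E))
    (L 12751506627578812727496 (L 30747495462269536523173508677768 E))))))))))) E)) (N 2 (N 3 (L
    1999632865030435152154175294037721224 (L 50935365163673189738599288045704 (L 11373388496634059
    E))) (L 145397808747348104 E)) (N 2 (L 7513937378977034816343605383 (L 11487737678659787 E)) (N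
    2 (N 11 (L
    282122375919918589531228639442174101695592125571878079562657802318491683752900749356433612 (L
    12751506627578812727496 (L 681329821535611833166332104 (L 182870934044541132 (L
    194410426427313008973709517 (L 2666528939310242460637779673528795272 (L
    200082338022547029769762635979 (L 19870299850121 (L 51051302414201176199 (L
    64413092255475646388947771902492299766008275332701094091 (L 40941774997625722003497385459848
    E))))))))))) (L 190178279559 E)) (N 2 (L 7513937379374459891809910919 (N 11 (L 19870299850121 (L
    30747493044344122139582226628744 (L 30589041555092647077257654370440 (L
    40941774997625722003497385459848 (L 14805393012259547705003085762592556771177108979847 (L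
    12751506627578812727496 (L 745403867652623086031995080 (L 182870934044541132 (L
    194410426427313008973709517 (L 30509813392578382854016741802120 (L
    200082338022547029769762635979 E))))))))))) E)) (N 2 (N 11 (L 11825912547155474808968 (L
    182870934044541132 (L 194410426427313008973709517 (L 681409531054434561183791686723567819 (L
    3068065160587450669596876 (L 19870299850121 (L 11862806035302894043272 (L
    681571790331263774547183264734380235 (L 621095705879979168123519112 (L
    40675492840884365171559510442120 (L 11825912828626156552328 E))))))))))) (L
    83412459697916052794746129694855 E)) (N 2 (L 165180913558531645974210609807495 (N 3 (L
    218161710351251348723518846792256375128200 (L 11373388496634059 (L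
    3346316252905400545847052281225232519 E))) E)) (N 2 (L
    174630513705324551524359152816595813859464 (L 194410399880985657029427405 E)) (N 2 (L
    181041248567034060 (N 11 (L 14805393011793320986115313132302899067882976690311 (L
    12751506627578812727496 (L 30509807522623747093079822368904 (L 182870934044541132 (L
    194410426427313008973709517 (L 12514656843464907 (L 200082338022547029769762635979 (L
    19870299850121 (L 30668263847652275768271204057224 (L 30589041555039549637646661320840 (L
    40941774997625722003497385459848 E))))))))))) E)) (L 2601053268269334667 (L
    11837181626311623508104 E))))))))))))))))) (L 2842965124055177 (N 2 (L 717710055047370 (N 2 (L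
    4078548277847602061155575485931476327354205037098082250522828 (L 12302966918 E)) E)) E))) (N 2
    (N 3 (L 1496989829 (N 3 (L 2067669210860099008495750 (L 789455080574914481099768010 (L
    11373388496634059 E))) (L 163913262953581049825960933752967 E))) (L 12647948422 E)) E))))))) (N
    2 (N 3 (L 749292964256025698438 (L 717710055047370 (L 2842965119205513 E))) (L 12034547846 E))
    (L 2828358277 (N 3 (L 2842965119336585 (N 7 (N 2 (L 902550596739174472452280030822828736714 (L
    717710055047370 E)) (L 30591203289111890924094600904840 (N 2 (L
    954365760722778111239427537371754809912938552230090 (L 717710055047370 E)) (N 3 (L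
    820864986104277644662931658 (L 789454990935324672549322954 (N 2 (L 717710055047370 (L
    11900362886 E)) E))) (L 789130683339393628745367754 (L 643973 (L 193898561671 E))))))) (N 7 (L
    643973 (N 11 (L 3519885664069542006556434835809474853994699 (L 789432914794383061877391562 (N 2
    (L 789432914794297299983794378 (L 789432914794311854540587210 E)) (L 193909829063074958114029773
    (L 789432914794297299970425034 (L 40688005749645692417496185962632 (L 184718114178990284 (N 2 (L
    789432914794311854540587210 (L 789130683051177560257724618 E)) (L 200082335144854954215402111179
    (L 40688005752018471302071580754056 (L 11371220421574859 E))))))))))) (N 2 (L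
    200043651907480643626953081035 (N 19 (L 54563490521608709723296193052876 (L
    51473592198900090711680651624652 (L 5458311 (L 2582616070783111 (L
    54568442281765851244395788501196 (L 200082768163725340498085019851 (L
    202055734621721183744102760651 (L 954397886900601471267629799831131521226 (L
    208129377939465080717690273995 (L 3661450746294937801657489749888726170599627 (L
    12749416957351226278088 (L 820569483099289172712751306 (L 820871714554192830006165706 (L
    12767863701424935764168 (L 937117939434855670118605675831711629514 (L
    208090692313237412584100200651 (L 954397886583689123442315583765279015114 (L
    202094420247948851877693882571 (L 200044082537497672364494946507 E))))))))))))))))))) E)) (N 11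
    (L 622058501294193821633020040 (L 184718114178990284 (N 19 (N 2 (L 2265956720181383 (L
    12647948422 E)) (L 5458311 (N 2 (L 2265956720148615 (L 12647948422 E)) (L 2265956720083079 (L
    3519885630319628519300575183219462420299979 (N 2 (L 12647948422 (L 2265956720672903 E)) (L
    13079621821588840060178451819135181 (L 873292234727353376070279062356815963488461 (L
    2265956720214151 (L 2265956720345223 (L 2265956721000583 (L 2265956721033351 (L 2265956720377991
    (L 2265956720246919 (N 2 (L 2265956720410759 (L 12647948422 E)) (L
    200082333226394027946663477451 (L 61922482863648747510444000929583171967146497086525800651 (N 2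
    (L 12647948422 (L 789432854842393346335178954 E)) (L 2276333264601223 E))))))))))))))))))) (N 2
    (L 181058840098767052 (L 46285237348219306119 E)) (L 13013702210828660959045404876341453 (L
    18358471493001 (L 3519885630319612464765690700944022322282699 (N 2 (L 12647948422 (L
    46285228552663154823 E)) (N 2 (L 144834278386303112 (L 12647948422 E)) (L
    193909829063074958114029773 (L 144891447823368328 E))))))))))) (L
    163913224267954678016251525103751 (N 2 (N 19 (N 2 (L 852303830539867198412947658 (L
    11716436042711243 E)) (L 202094420247948851877693882571 (L 200044082537497672364494946507 (L
    54563490521608709723296193052876 (L 51473592198900090711680651624652 (L 5458311 (L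
    2591412163805319 (L 54568442281765851244395788501196 (L 200082768163725340498085019851 (L
    202055734621721183744102760651 (N 2 (L 852001599084963541119008970 (L 11716436042711243 E)) (L
    208129377939465080717690273995 (L 3661450746294937801657489749888726170599627 (L
    12749416957351226278088 (L 820569483099289172712751306 (L 820871714554192830006165706 (L
    12767863701424935764168 (N 2 (L 11716436042711243 (L 208129378419080655332557193419 E)) (L
    208090692313237412584100200651 E))))))))))))))))))) (L 200082337533708311760543154379 E)) (L
    182888526939422924 E))))))) E))) E))))) (K 2 (N 2 (N 5 (L 11373367877959883 (N 7 (L 790122629 (N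
    3 (L 158852 (L 11824831925145802277000 (L 11824831643666530599048 E))) (L 107263696961672 (N 3
    (L 144895852169822344 (L 158852 (L 144895852169756808 E))) (L 732004793581770 (N 3 (N 3 (N 7 (N
    2 (L 37323439890566 (L 144895875171844232 E)) (L 10625699715802988745 (L 44978210813392570548427
    (L 11824831909317421695112 (L 176838569524583274865754317 (N 2 (L 144895875172434056 (L
    37323439890566 E)) (L 158618190467039432 E))))))) (L 144557201524064392 (L 36498806169734 E)))
    (L 193999290503 (L 158852 E))) (N 3 (N 17 (L 190077517959 (L 11371169045545163 (L
    47703362384106299588811 (L 2756916281480 (L 2756916084872 (L 2619106784264327 (L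
    145071273666576520 (L 144508307410026632 (L 2627902877286535 (L 2267263063376007 (L
    2276060230107271 (L 144789798689865864 (L 2765506085000 (L 2302447435464839 (L 189704585351 (L
    5326983 (L 2619111079198855 E))))))))))))))))) (L 158852 (L 145740285689888904 E))) E))))))) (N
    7 (N 2 (N 3 (N 2 (L 144895912299364488 (L 717711156052170 E)) (L 158852 (L 192925614215 E))) (L
    202106781831 E)) (L 732004793581770 (N 3 (L 158852 (N 23 (L 144614390732325000 (L
    2705239031021767 (L 42570676410243642032331 (L 144614390736781448 (L 665104273364558545098 (L
    44489137793909435400395 (L 549128330 (L 2889622425166676173 (L 665392503740710256842 (L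
    196738400391 (L 42579899782280496808139 (L 2716714483187911 (L 196519968903 (L
    144614390732783752 (L 144614390734028936 (L 2954876496192051982893260 (L 173579020321161416 (L
    695080232484336566474 (L 695368462860488278218 (L 173297545344450760 (L
    2955171644097231335719116 (L 144614390733963400 (L 144614390732849288 E)))))))))))))))))))))))
    (L 193999290503 E))) (L 181041330224890060 (L 790122629 (N 17 (L 789136245897790497519173834 (L
    200044012735022717590979739851 (N 3 (L 2337645766164615 (L 2337645766197383 (L 158852 E))) (N 23
    (L 11975219485102068498568 (L 49050569551894364295 (N 2 (L 47609593598902026375 (L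
    712506722163326781603975 E)) (L 11491171183135696674958546302832417756232548556 (N 3 (L
    145402223973925000 (L 158852 (L 46312380978289492103 E))) (L 11864535642964385497224 (L
    12178148869329687642248 (L 196519968903 (L 12159683548143738847368 (L 46600523407633203335 (L
    549128330 (L 46744638595709091975 (L 12178130292217448333448 (L
    11563648669913863001911256257000872940796903628 (L 12159702125255978156168 (L
    11882982387038094983304 (L 40824794826276377550558852022476 (L 620940953258830788848943240 (N 3
    (L 158852 (L 48906577508420370567 (L 145402223973925000 E))) (L 48906454363818475655 (L
    11993666229175777984648 (L 2889622425166676173 (L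
    11562254843015941184121516923986177479099285708 E))))))))))))))))))))))) (L 190077517959 (L
    789438552580736568502911178 (N 3 (L 158852 (L 2765506085000 (N 2 (L 3099055443909263608512716 (L
    146021777846403208 E)) E))) (L 11371169045545163 (L 789136321125832911208972490 (N 3 (L 158852
    (L 2302447435464839 (N 2 (L 146021777846403208 (L 2346431121768583 E)) E))) (N 3 (L
    145402223973859464 (L 158852 (L 2311244602196103 E))) (N 3 (L 2346441859186823 (L
    2346441859219591 (L 158852 E))) (L 200082698361250385724570861771 (L 789438477352694154813112522
    (N 3 (L 2267263063376007 (L 2756916150408 (L 158852 E))) (L 5326983 (N 3 (L 2276059156365447 (L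
    158852 (L 2756916084872 E))) E))))))))))))))))) (L 107263696109704 E))))))) (L 3407008022663 (L
    756560005 E))))) (L 46536836 E)) (K 2 (N 7 (N 3 (L 181041282217935052 (N 5 (N 2 (L
    131368288338526709909806884820985281839240 (N 11 (L 3046222561416 (L 3046222561416 (L
    3046222561416 (L 3046222561416 (L 3046222561416 (L 3046222561416 (L 3046222561416 (L
    3046222561416 (L 195580608647 (L 2467206 (L 3046222561416 E))))))))))) E)) (N 11 (N 2 (L
    12068891246579039764616 (L 716221581643909 E)) (L 155224248952125566933270733 (L
    46917917943199827268933888287361287403892994212045 (L 11829086388374877601928 (L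
    50789442332172394876376312873096 (L 11829083010675157074056 (L 204025674721157254 (L
    3045235026155085845536902 (L 3032885067912 (N 2 (L 716221581643909 (L 11884423242896285728904
    E)) (L 2467206 E))))))))))) (L 717988945592522 (N 2 (L 11371173149671627 (L
    839045059687949323070938467300278475 E)) (N 2 (L 750030981 (N 5 (L
    221949558940282495181306403095587297237388789609922764 (L 163354148554510577816714814210183 (L
    12452246972895681392601530503 (L 2272795279310983 (L 2495241452077191 E))))) E)) E))))) (L
    19320885543048 E))) (N 3 (N 5 (L 804399289080192328783121360813198106514424010 (N 11 (L 2467206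
    (N 2 (L 205426325039386969791985455579271 (L 180908069004476552 E)) (N 2 (L
    2964901921926953345920391717519283398901963 (L 731296166727849358776829308829898 E)) (L
    11995103707390082711688 (N 2 (L 51439352392707320255879702020232 (N 2 (L 733796571033733 (L
    768998081073285 E)) E)) (N 2 (L 218819511812989548521323273131342826864776 (L
    52231631600016771428096889094280 E)) (N 2 (L 11865977061739042341000 (L 173262361962152136 E))
    (N 2 (L 194938716295 (L 11839037836896021848041488258709582040259968368843 E)) (N 2 (L
    50805528301482133933408624214152 (L 3082972452843876691026054 E)) (N 2 (N 2 (L 11716427343724747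
    (L 733796571033733 E)) (L 195580608647 E)) (N 2 (L 50963982208695914615676378316936 (L
    50947887779238918026753592230024 E)) E))))))))))) (N 2 (L 183759477001986182 (N 19 (L
    50483689706341154951 (L 49042520234470195335 (L 47889616320975782023 (L 54807145348617650311 (L
    54663012569428738183 (L 46736694816368803975 (L 12816580655598998604432687239 (L
    12816583016638116054549545095 (L 46592579628292980871 (L 2878137536459885213909196 (L
    54663030160541827207 (L 47745501132899958919 (L 48898405046394372231 (L 50339574518265266311 (L
    48898422637506936967 (L 12739214125222117141958180999 (L 2646258928007 (L
    12739216486693386642256117895 (L 49042537825582760071 E))))))))))))))))))) E)) (L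
    717988945592522 (N 2 (L 839045059687949323070938467300278475 (L 11371173149671627 E)) E))))) (L
    1864937861 (N 2 (L 766791813 (N 2 (L 11373372227453131 (L 41082325009673731894423456841932 E))
    E)) E))) (L 3910783877 (N 5 (N 2 (L 184885376908812422 (N 2 (N 3 (L 75528503430 (N 3 (L
    690959409392422822059076992478477844614 (L 14852947604133965747602695347867961962300637385 (L
    182696067207 E))) (L 787969373447560417413 E))) (L 193432993927 E)) E)) (N 2 (L
    11371173149671627 (N 2 (L 742592664064133 (L 777794174087301 E)) E)) (N 3 (L 75528421510 (N 17
    (N 2 (N 11 (L 50963543259662797835792947871948 (L 11865977061739042341000 (L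
    623305366661837549851574408 (L 51221034787834156932972020236492 (L 195580608647 (L
    681412984886745946932478472674083019 (L 2467206 (L 180908069004476552 (L
    11490493562600408211467146557640292431373009100 (L 145071403052728456 (L
    624514292481452179026346120 E))))))))))) (L 553347653089323000966590876377531553949941962 E)) (N
    11 (L 193914651733587286690889933 (N 2 (L 180908069004476552 (L
    701300761759777219295879093204870955532493 E)) (N 2 (L 194938716295 (L
    11839038331645856270185378433083851358328814305483 E)) (N 2 (L
    11491160332980441984114516139667023329763524812 (N 2 (L 777794174087301 (L 742592664064133 E))
    E)) (N 2 (L 3082977065656069836054662 (L 50805528301482133933408624214152 E)) (L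
    11995103707390082646152 (N 2 (L 30665788874247380815314636439688 (L 195580608647 E)) (N 2 (L
    2822646696959938113733620272402101782446283 (N 2 (L 777794174087301 (L 742592664064133 E)) E))
    (N 2 (L 51027115941753182364347136245896 (L 681412984886745946932478416840032459 E)) (N 2 (L
    749075103324527919466766447130181835 (L 30665788874247380815314516312200 E)) (L 2467206
    E))))))))))) (N 2 (L 211280291461595094883038064795137750697440596469253836991809716429 (L
    180621057395490952 E)) (N 2 (L 7548084313061798311784153223 (N 11 (L 11995103707390082646152 (L
    31157252278769496642092187844744 (L 622096258897603788083036296 (L 11865977061739042341000 (L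
    30586566038562509397694317985928 (L 50805528301482133933408624214152 (L 195580608647 (L
    51043209162263892307921697276040 (L 2467206 (L 180908069004476552 (L
    19162211457971765691728636267238313323343231467651941247921205284839155510932930764 E)))))))))))
    E)) (N 2 (L 190211801223 (L 7548084313240798805322924167 E)) (N 2 (L 11485530065469643 (N 11 (L
    622096258897603783787872392 (L 11865977061739042341000 (L
    204949372186170919615085069056876978861420078068400332 (L 200082617038829703311805645003 (L
    195580608647 (L 51043209162263892307921697276040 (L 2467206 (L 180908069004476552 (L
    3424872146800928421543114060903319361631640796285558098886792 (L 11995103707390082646152 (L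
    220930336254097454478562776089172933968008 E))))))))))) E)) (N 2 (N 11 (L 2467206 (L
    180908069004476552 (L
    19162211457971765356095848062374526145643447420926502517509713909330008882259951820 (L
    11995103707390082646152 (L 31157252279343578930838111387784 (L 32028760858074667068207942140040
    (L 11865977061739042341000 (L 189570695303 (L 50805528301482133933408624214152 (L 195580608647
    (L 51043209162263892307921697276040 E))))))))))) (L 3036760146056 E)) (L
    10449885579601441824978433207173325 (L 2756916281480 (L 2765506085000 (L 2756916084872 (N 2 (L
    941284148597788001951569350507601817522209116422280 (L 181058875112816844 E)) (N 2 (N 3 (L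
    61910598080784458208088456042672881992923104284788916427 (L
    4037748537474331055934207050463041125030675432470788475191500 (L 191285477511 E))) (L
    11990326020829131613798738481232487117383039713483 E)) (N 7 (L
    17757772631022928529436629731212712917557330949272927948567529975303897293 (L
    17757772631022928529436629731212712917557330949272927948567529975303897293 (L
    17757772631022928529436629731212712917557330949272927948567529975303897293 (L
    17757772631022928529436629731212712917557330949272927948567529975303897293 (L
    17757772631022928529436629731212712917557330949272927948567529975303897293 (L
    17757772631022928529436629731212712917557330949272927948567529975303897293 (L
    175720670169717693083519581548744481702024 E))))))) (N 2 (N 11 (L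
    50805528301482133933408624214152 (L 195580608647 (L 30681882094758091001893159501960 (L 2467206
    (L 180908069004476552 (N 2 (L 146532521927082120 (L 697804478021392613566901751294506041548 E))
    (L 144789928076017800 (L 6589694658918377595287474666772891843286168764619 (L
    32028760857500584740983406788744 (L 11865977061739042341000 (L
    1999328815815326366620711866620739720 E))))))))))) (L 37575523329590231175 E)) (L
    608080241492105 (N 2 (N 3 (L 40675472251377218277408629653640 (L 191285477511 (L
    1341692254028594790913499532810584200 E))) (L 144789777332600968 E)) E))))))))))))))))) (N 2 (L
    766791813 (N 2 (L 11373372227453131 (L 3376125886149623627285095328879165575 E)) E)) E))) (L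
    15632019590749739951354940554 (N 3 (N 11 (L 3217148772488 (L 731596891861196764222388977008842
    (N 2 (L 750030981 (L 195580608647 E)) (N 2 (L 665095266181155127498 (L 750030981 E)) (L 2467206
    (L 51423256752009473277653156528264 (N 2 (L 750030981 (L 47429108506833535111 E)) (L
    190514876644352134 (L 731279978878197911152129750335690 (N 2 (L
    209229276840071695045619374932103 (L 750030981 E)) (L 665095266181141233866 E))))))))))) (L
    12697231494 (L 75528437894 E))) E))))) (N 3 (N 2 (L 194506801287 (N 2 (L 742644178497669 (L
    777777010978949 E)) E)) (L 19320885608584 (N 5 (L 751388782252165 (L 717988945592522 (N 2 (L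
    774886807175370 (L 766791813 E)) (L 12697231494 (N 2 (L 46852648518497157255 (L 766791813 E))
    E))))) E))) (N 2 (L 733813708968069 (N 5 (N 3 (L 51089869482254703263154294530182 (L
    2926127033033393567421388978681741512 (L 75528421510 E))) (N 3 (L 75528437894 (L 12697231494 (L
    2926127033033393585868414531663036616 E))) (L 11371173149671627 (L 45987472006 (N 3 (L
    75528503430 (L 51089869501144169195457509105798 (L 194967646609815609610464761872583 E))) E)))))
    E)) (N 2 (N 5 (N 3 (L 12697231494 (N 2 (L
    54258888183901244795283766152673965881155661122473093038989076594892 (L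
    684843450382172246818670861384085930188 E)) (L 75528437894 E))) (L 11371173149671627 (L
    184700487742259404 (N 3 (L 30586559502807296018671279865992 (N 2 (L 751003827706036244613 (L
    188064448647 E)) (L 75528503430 E))) (N 3 (L 75528421510 (L
    2926127112261556081686008047202468040 (N 3 (L 1836567534162613599158406 (L
    11825336297278633312392 (L 191285477511 E))) E))) E))))) (L 11373379797647563 E)) E))))))) (K 2
    (K 13 E))))))))))))))
    (by decide +kernel) (by decide +kernel)

lemma full27 : Full 27 := by
  refine full_of (by norm_num) [(7, 38859706832022938855774934325734814899481175406730721524608383671904644378347149684827945735426323543712555096118948309665416918511721019887359417774689660082729629572124165929979710190173227409065129161833870735727268975305901842835930962725110429385274675631985736409297364720488388391710808879505179940106655437236806081774317166447387945878864422050432723068005926092620731824204466248212152567655409264564462030881512678174407149444047374872715641986476665771423436698922441164028182372527568873477057753179591966004551223161032337263128050915793827976413727357247777532793125849380445478867247185417579907440119114787635757615022024733469280204892661480967836850204523749986344851224420876181347465081654107778698608378027),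
    (8, 127318633960587322695920147380905343334582675512891077024878969891164699962611101276897298),
    (10, 1661737764928178789675237082480756392462),
    (17, 38409027252351433965707),
    (19, 38482814547620610441355),
    (37, 342600311559070814857)]
    (K 27 (L 38019 (L 200808251591 (K 3 (N 2 (L 150020 (N 3 (N 7 (L 734106857517189 (L
    718258217550026 (L 734081154846853 (L 716488968786053 (L 3919950725 (L 716480370462853 (L
    734072556523653 E))))))) (L 45802089414857 (L 775434373 E))) E)) (N 5 (L 610949 (N 2 (L
    975847557 (L 13798936093578693935304 E)) (L 53911368717783711943 (L 53911377513339863239 (N 2 (L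
    13798936375049375678664 (L 975839365 E)) E))))) (K 3 (N 3 (N 5 (L 11377761781547211 (N 2 (N 2 (L
    4371905544327 (L 3085776277074908637823180 E)) (L 718259814006986 E)) (L 757092485 (L
    3992763119046316188486399954123 (N 2 (L 718259814006986 (L 4652922629676666889 E)) E))))) (N 5
    (L 757092485 (L 47056970374 (N 2 (L 4652922629676666889 (L 204271042695 E)) (N 11 (L
    2761362243720 (L 96724149638 (N 2 (L 733103206826186 (L
    241954746373529125682792313105520817400732719080014028 E)) (L 2889763095147708621 (L
    2769951981704 (L 12222226566 (L 181076664882036940 (N 7 (L 40834700937694269097752147263692 (L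
    643973 (L 776169385547911173425561736 (N 2 (L 733103206826186 (L 292675169754349830 E)) (L
    790638725 (L 181527094454222984 (N 2 (L 323888693511 (L 733103206826186 E)) E))))))) (N 2 (L
    733103206826186 (L 332478464263 E)) (N 2 (L 682072786950648006875894113119645991050 (L
    733103206826186 E)) (L 144799659968266376 E))))))))))) (N 11 (L 2769952047240 (N 2 (N 7 (L
    643973 (L 790037396151975398849511626 (L 3147525103221284969840841 (L
    200121023842483529417945252043 (L 200159709468711197551536373963 (L 790638725 (L
    790037395863744747819892938 E))))))) (L 319746484632036585443384299529 E)) (N 7 (L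
    204138537138213016497553613 (L 790638725 (L 145081289563865224 (N 2 (L
    790037395863744747819892938 (L 182026517750481100 E)) (N 2 (L 182026517750481100 (L
    806357894428542241692582090 E)) (L 643973 (L 2675172229337068440412427998940168327 E))))))) (L
    96724149638 (L 2761362178184 (L 144518184991555720 (N 2 (L 13009422996034832990344 (L
    3033287393416 E)) (L 12222226566 (L 181076664882036940 (N 7 (N 2 (L 195072966791 (L
    859595937096894581140644680933783896652 E)) (L 790638725 (N 2 (L 195072966791 (L
    9077063601668231 E)) (N 2 (L 331404656903 (L 195072966791 E)) (L
    40834700937694269097752147263692 (L 643973 (L 3045888262280 E))))))) (N 7 (L 144799694328004744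
    (N 2 (L 790037395863744747819892938 (L 331404656903 E)) (N 2 (L 332478464263 (L
    806357894428542241692582090 E)) (L 643973 (L 2675172229337068440412427998940168327 (N 2 (L
    790037396151975398849511626 (L 332478464263 E)) (L 790638725 E))))))) E))))))))))) E))))) (L
    723529861 E))) (N 7 (L 718260365033674 (L 3087433108977877131 (N 5 (N 11 (L 144555604466368648
    (N 2 (L 194448205374657124220534989 (L 5501157359460483241943302 E)) (L 2769951981704 (N 2 (N 2
    (N 3 (L 11492556137187449713646213377757885535701958860 (L 2320363834884231 (N 2 (L
    4751117906023727366280 (L 4767151989044537327752 E)) E))) (L 173375783047 E)) (L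
    42214641431123929479872922119 E)) (N 2 (L 11331906522470940485110782993740481031 (N 3 (L
    182976487206944972 (N 13 (N 2 (L 173375783047 (L 620446221707888236981354632 E)) (L 172817940615
    (L 2637009740972167 (L 12917984911972987764872 (L 144453344964673672 (L 144734819941384328 (L
    3080716517512 (L 2637009740939399 (L 172817973383 (L 2477239105044615 (L 75652007389659272 (L
    151075487879 (L 2264137724641415 E))))))))))))) (L 51033495056441993327711998836872 E))) E)) (L
    2761362243720 (L 12166652038 (L 96707388806 (N 2 (L 2676063345653227108845074063094710859 (N 2
    (N 13 (L 172817973383 (N 2 (L 305620058420564625277063 (L 18679819868697591943 E)) (N 2 (L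
    11856075828686074544264 (L 28823108962501666537675 E)) (N 3 (L 75652007389659272 (N 2 (L
    81318241170794943598660419787 (L 18344194367622 E)) (L 48708701329098103849163 E))) (L
    185900187783 (N 3 (L 2320363834884231 (N 3 (L 11855709814896174825608 (L
    1340740350268988190707645760564985992 (L 2264144166338695 E))) (L 49613992378411057287 E))) (L
    79311079009321096 (N 3 (L 47712577386606930952395 (L 2320363834884231 (L 144453344964673672 E)))
    (L 2477239105044615 (L 172817940615 (L 2273288751661191 (L 151075487879 (N 3 (L
    180964114621628552 (N 3 (L 11377786562019531 (L 753438840617859809482 (L 191268733063 E))) (L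
    2264151208607879 E))) E))))))))))))) (L 173375783047 E)) E)) (N 2 (N 2 (L 173375783047 (N 3 (N 2
    (L 72777820727836808 (L 28832332572107177722059 E)) (L 11825769498245693866120 (L
    2320363834884231 E))) E)) (L 3053896548720802826028108 E)) (N 3 (N 2 (L 182026418967281868 (L
    2934689398920 E)) (L 150466544617488520 (L 11615258327384267 E))) E))))))))))) (N 2 (N 2 (L
    173375783047 (L 181076531000901836 E)) (L 1295544581 E)) (L 2837533317 (N 2 (L 72837154543403144
    (L 73329809163814147522696 E)) (N 2 (L 11496511043272907 (N 3 (L 188047540359 (L 747947150672074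
    (N 11 (N 3 (L 40834713853071478423124797554892 (L 145081182374232200 (N 17 (L
    48893930118278332551 (L 11844207761797903679624 (L 3037767041160 (L 341984646386332328933589194
    (L 100099681705396894304722223307 (L 13275579065565387 (N 2 (L 181094265827885260 (L
    73963084766806152 E)) (L 71667849 (L 11377763985653963 (L 325966379276438492368732362 (L
    100138367331624562438312820939 (L 11496533789507787 (L 155243134944515198499684557 (L
    314042436147500835573694600 (L 46250684763786610999499 (L 195968783140531835163902157 (N 2 (L
    181094265827885260 (L 73963084766609544 E)) E))))))))))))))))) E))) (L 144555604466303112 (L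
    2761362178184 (L 156682083849371784 (L 11850553815728331 (L 195563962503 (L
    194438760641832964345299149 (L 12166652038 (L 2769952047240 (L 96707388806 (N 2 (L 173375783047
    (L 51919809339185201287 E)) E))))))))))) E))) E)) E))))) (N 5 (N 2 (N 17 (N 2 (L
    11174030666573152457 (N 2 (L 193928745069282952819507405 (L 18343925948550 E)) E)) (L
    699400592729992069322 (L 699112362353840357578 (N 3 (N 3 (L 11898232966 (L 46732315048621981831
    (L 718535271252170 E))) (L 186973864071 (L 9530457417033799827592 E))) (L 2724756327137479 (L
    174692838703169736 (N 3 (L 189595336839 (L 186973864071 (L 2920163715027304653 E))) (L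
    11377763985653963 (N 3 (L 186973864071 (L 3037767041160 (N 2 (L 2864265296721288641904844 (L
    144458808163598472 E)) E))) (L 44756566049993351758027 (L 71667849 (L 44747342677956496982219 (N
    3 (N 2 (L 2863970148816109289078988 (L 12424079403811393636348821639 E)) (L 186973864071 (L
    155243134944515198499684557 E))) (N 3 (N 3 (L 3136802685064 (L 75370498053210248 (L
    2889905154351431885 E))) (L 46299847941114904711 (L 186973864071 E))) (N 3 (L 186973864071 (L
    515990012941632048309086490398294219 (L 48173354182730891399 E))) (L 11496533789507787 (L
    181076673528594636 E))))))))))))))))) (L 18721979482161287 E)) (L 3049997369480 (N 11 (L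
    2769951981704 (N 2 (L 42369383936034602014235443719 (N 3 (L 186973864071 (L
    1940216161631116043026633 (L 144799660406177928 E))) E)) (N 2 (N 3 (L 144799690217914504 (L
    186973864071 (L 480429177791869690393002186 E))) (L 5501125090046826034307334 E)) (L
    2761362243720 (L 12166652038 (L 96707388806 (N 2 (N 3 (L 186973864071 (N 2 (L 2273278014898311
    (L 30638719363341510110704912629896 E)) (N 2 (L 775790543760056609798914184 (L
    10687377994297376969 E)) E))) (L 5501125076532728617312518 E)) (N 3 (L 145081285453381768 (L
    58614213853667249810551616635256839838653119201485 (N 2 (L 733103757852874 (L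
    312582535494589030911606920 E)) E))) (N 3 (L 11615258327384267 (N 2 (L 182026418967281868 (L
    2934689398920 E)) (L 150466544617488520 E))) (N 2 (L 42408067200934904728834556423 (N 3 (L
    160565065481436705919260950731 (L 186973864071 (L 315107769774470419632685192 E))) E)) (N 2 (L
    194448205374657124220534989 (L 157406252378651640327 E)) E))))))))))) (N 2 (L 1295544581 (N 2 (L
    181076531000901836 (L 74526004403601544 E)) E)) (L 2837533317 E))))) (N 2 (L 1163613274247 (N 13
    (L 2274931113017479 (L 2274931112984711 (N 3 (L 11613059360751819 (L 3229509551352537394708684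
    (L 2272953144230023 E))) (N 3 (N 5 (L 86910903378935944 (L 775013566694934653951377544 (L
    188047540359 (L 2837533317 (L 49885369440869056647 E))))) (L 2264137724641415 (L 12435153030
    E))) (N 2 (L 185900187783 (N 3 (L 193928744939944264714944717 (N 3 (L 181094265827885260 (N 5 (L
    75370446513668232 (L 4390947434791049 (L 72837171723206792 (L 3050904322184 (L
    53649297153506443399 E))))) (L 3054946648200 E))) (N 5 (L 13228768189265683218568 (L
    218358963092886939460396915979468102795400 (L 4390947434791049 (L 144458828984778888 (L
    188047540359 E))))) E))) E)) (N 3 (L 2272938112008327 (N 5 (L 11825789764408499601544 (L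
    11844236508482209218696 (L 188047540359 (L 2837533317 (L 47712577386606930428107 E))))) (L
    610672170714702173732999 E))) (L 172817973383 (L 151075487879 (L 172817940615 (N 3 (N 5 (L
    47712577386606930952395 (N 3 (L 11377786562019531 (L 181613548071329926 (L 191268733063 E))) (L
    50791289106919237481311080939656 (L 188047540359 (L 2837533317 E))))) (L
    610672170723497729884295 (L 2264142018986119 E))) (N 2 (N 5 (L 4390947434659977 (N 2 (L
    144836477476667528 (L 145458800152412296 E)) (L 181076531000901836 (N 17 (N 3 (L 3037767041160
    (L 683547922041647923402 (L 514911105564270872324060330388401160396 E))) (L 11174030666573152457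
    (L 47308740617090154631 (L 46732279864786731143 (L 71667849 (L 46588164676710875271 (L
    47164625429014298759 (L 11165023467318411465 (N 3 (L 683836152417799635146 (L 2272948849426567
    (L 155243134944515198499684557 E))) (L 2724756327137479 (L 72837184859963528 (L
    174692838703169736 (L 46282949050901807239 (L 46299934300559163527 (L 11496533789507787 (L
    11377763985653963 (L 181076673528594636 E))))))))))))))))) (N 3 (L 49613992378411057287 (L
    72837171723206792 (L 47003065668614652039 E))) E))))) (L 180964113965482120 E)) (N 2 (L
    10418506066445462381648300192301261 (N 5 (N 3 (L 10521819570473455748487233495105741 (L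
    72837171723206792 (L 3070129695855379517276364 E))) (L 4390947434659977 (N 2 (L
    144836477476667528 (L 145458800152412296 E)) (L 181076531000901836 (N 17 (L 181076673528594636
    (N 2 (L 2665786242448070684625108798424645768 (L 18069048041606 E)) (L 2293977145458823 (L
    47308740617090154631 (L 46732279864786731143 (L 71667849 (L 46588164676710875271 (L
    47164625429014298759 (L 11165023467318411465 (N 2 (L 2670978460079651923808916330384621704 (L
    18069048041606 E)) (L 2724756327137479 (L 72837184859963528 (L 174692838703169736 (L
    46282949050901807239 (L 46299934300559163527 (L 11496533789507787 (L 11377763985653963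
    E))))))))))))))))) E))))) E)) (N 3 (N 3 (L 11377786562019531 (L 191268733063 (N 5 (L 2837533317
    (L 181613273126314118 (L 40832276849872427371699807191244 (L 188047540359 (L 181613548071329926
    E))))) E))) (L 2264157051207815 (N 3 (N 5 (N 19 (L 3072126451848 (L 192342540423 (L 191742689415
    (L 313565216691212909625479 (L 1159307047518343 (L 1141708419186823 (L 1159300605231239 (L
    5458311 (L 182993989029855436 (L 1150504512209031 (L 1168103140540551 (L
    41102127195119404884353337000140 (L 28089045855701614727 (L 1159298457616519 (L 1150502364594311
    (L 28557934750140022919 (L 27981438813464510599 (L 28089045847648551047 (L 28557934749603119239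
    E))))))))))))))))))) (L 2837533317 (N 17 (L 2723725061062855 (L 181245585554047112 (L
    46588199860546093191 (L 11496533789507787 (L 46444190226123407495 (L 11882191720615694729352 (L
    11863744976541985112200 (L 11377763985653963 (L 174692838703235272 (L 46732315048621949063 (L
    46732279864786763911 (L 181076673528594636 (L 46444049488635052167 (L 11882214238257349296264 (L
    71667849 (L 11863767494183639679112 (L 189595336839 E))))))))))))))))) (L 2310113337589895 (L
    747947150672074 E))))) (L 718535271252170 (L 11898232966 E))) E))) E))))))))))))) E)) (N 5 (N 2
    (N 3 (L 188047540359 (L 747947150672074 (L 72555696746561672 E))) (L 11496511043272907 E)) (N 2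
    (L 1193516037774409864 (L 3046356844680 E)) (N 2 (N 3 (N 2 (L 181076531000901836 (L
    13360705930921664118920 E)) (L 11493949924873144586200772688647423642729185484 (L
    187246070188777606 E))) (L 1295544581 E)) (L 2837533317 (N 2 (N 3 (L 186120170281918598 (N 23 (L
    395148859133235674180845704 (L 2943279202440 (L 327449013234816440397299848 (L
    322613309956357923698475144 (L 181076440977506508 (L 80462267682029704 (L 75114243124527240 (L
    92002741727166600 (L 75958668054659208 (L 72862443310841992 (L 83839967402557576 (L
    114911401988969643802362064 (L 84121442379268232 (L 72580968334131336 (L 76240143031369864 (L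
    91721266750455944 (L 74832768147816584 (L 80743742658740360 (L 73988343217684616 (L
    321404384136743294523768968 (L 76240160214122632 (N 3 (L 3136802685064 (L
    312834860835817127432847496 (L 2889905154351431885 E))) (L 393939933313621045006139528
    E))))))))))))))))))))))) (L 11493949924790067841415975308584569213891379404 E))) (L
    397497344906048185802918648538457232817149590486428157003 E)) E))))) (N 3 (L 11629863046 (N 2 (N
    5 (N 3 (L 3136802685064 (L 2889905154351431885 (L 72555748286103688 E))) (L 73963054451032200 (N
    2 (L 2496274957910151 (L 859596560498703503891574507785827123404 E)) (L 11852775471972555 (L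
    2837533317 E))))) (L 1312305413 E)) (N 2 (L 616368940678980102 (L 182026509103923404 E)) E)))
    E))))))) (K 9 (N 7 (N 3 (L 747948252725450 (N 5 (N 2 (L 186990772359 (L 67130392710 E)) (N 3 (L
    3136869728392 (L 2889764348143599821 (N 2 (L 67130376326 (L 144840942069907592 E)) E))) (N 2 (L
    147937098094444680 (L 67130409094 E)) (L 777909916008650 (N 2 (N 2 (L
    776458648012549790246404232 (L 2273280179159175 E)) (L 67130425478 E)) E))))) (N 2 (L
    2508675041740263913734275658 (L 194506801287 E)) E))) (N 2 (N 5 (L 182026668811485388 (L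
    718536288370890 (N 3 (L 11496529437917387 (L 750571653 (L 144559415553589384 E))) (N 3 (N 23 (L
    144840878033895560 (L 157225794187198600 (L 144840878031208584 (L 144840878035665032 (L
    3196174388103 (L 144840878035730568 (L 144840878031274120 (L 620877884492740957341384840 (L
    144840878033830024 (L 193426404688789708 (L 144840878031536264 (L 144840878033109128 (L
    620877884492740957344989320 (L 144840878031995016 (L 144840878031798408 (L
    620877884492740957341057160 (L 620877884492740957341122696 (L 144840878031732872 (L
    144840878032060552 (L 620877884492740957345054856 (L 144840878033043592 (L 196020879495 (N 3 (L
    3136869728392 (L 2889764348143599821 (L 873377336474133189810989242829303598547149 E)))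
    E))))))))))))))))))))))) (L 9967691658638999173248123015 (L 790039089218982551067689162 E))) (N
    3 (L 789736857764078893773750474 (N 2 (L 193432993927 (L 11825452461759889866888 E)) (L
    9967694019678134215551025287 E))) E))))) (L 637984187860762780704492225099 E)) (N 5 (N 2 (L
    67130392710 (N 2 (L 173375815815 (L 193432993927 E)) E)) (N 2 (N 3 (L 750571653 (N 11 (L
    2761362178184 (L 155753212812685255479656653 (L 144518215173832840 (N 2 (L 173375815815 (L
    47430987139037495431 E)) (L 144518185497690248 (N 3 (N 17 (L 11884716274799258828936 (L
    182976646801260748 (L 11825448017932411076744 (L 189578395783 (L 2337631600967815 (L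
    11884716274799257649288 (L 190211801223 (L 5326983 (L 11884716274799257845896 (L 2900262813832
    (L 11884716274799258173576 (N 2 (L 145418142725079176 (L 3054879473800 E)) (L
    620878493231917741189070984 (L 193928725431476501546533069 (L 11884716274799258894472 (L
    181527055010791560 (N 2 (L 3054879473800 (L 144573717794947208 E)) E))))))))))))))))) (L
    9533131082750801084552 (L 144560019692814472 E))) (L 2769952047240 (L 190594119135396044 (L
    184876426119872716 (L 11377768110751947 (L 12162605190 E))))))))))) (L 11496529437917387 E))) (L
    67130409094 E)) (N 2 (L 67130425478 (N 2 (N 11 (N 13 (L 11734023892893899 (N 3 (L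
    201078450552043882740187341 (N 3 (L 191285477511 (L 145362657283768456 (L 11375583243796683 E)))
    (L 2273290915922055 E))) (L 2264139855347847 (L 172817940615 (N 2 (L 47712597414173112533195 (L
    11843927086222643626120 E)) (L 151075487879 (N 3 (L 2273290915922055 (L 161226394481885320 (L
    2272946685034631 E))) (L 172817973383 (N 2 (L 610136598117136644227207 (L
    160507736948319827235548168395 E)) (L 2320086809493639 (N 3 (N 3 (L
    14769187330503617055196169702835232734845531062475 (L 2275208138408071 (L
    11000994225244169728405386657005773 E))) (L 46422242054244106375 (L 2273290915922055 E))) (L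
    151314797816348808 (N 3 (L 2273288135065735 (L 47712597414231236673739 (N 2 (L 35957851054214 (L
    37276343538974523527 E)) E))) E))))))))))))) (N 3 (L 40689931618073190103262630576264 (L
    2273290915922055 (N 2 (L 11841514510217419784328 (L 160564980483310666008618336459 E)) E))) (N 3
    (L 194376382678565068 (L 144518180815339656 (L 12162523270 E))) (L 97120511366 (N 3 (L
    195580608647 (L 2273290915922055 (N 2 (L 183769743495 (L 629406121205227611104575624 E)) E))) (L
    144799690150543496 (L 11377768110751947 (N 3 (L 790058926098101341546479818 (L 2273290915922055
    (N 2 (L 146040559889383560 (L 144914574083260552 E)) E))) (L 2761362243720 (L 180628793051021448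
    (L 2769951981704 E))))))))))) (L 173375815815 E)) E)) (N 2 (L 144559398373654664 (L 67130376326
    E)) (L 777909916008650 E))))) (L 3901608837 (L 784093317 (N 5 (L 777909916008650 (N 2 (L
    67130392710 (N 17 (N 3 (L 789736857764078897305878730 (N 13 (L 172817973383 (L
    762424492109191765344391 (L 2264142002077831 (L 2477511835467911 (L 3038253997026692914217164 (L
    151075487879 (L 166307220533969032 (L 2264153372868743 (L 2897504685987463373 (L
    762424348002799782510727 (L 172817940615 (L 2275165113974919 (L
    873377336474767030411570427635430336757965 E))))))))))))) (L
    855192746864156681830606923076177756364 E))) (L 789736857764078897235099850 (L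
    790043019240072594064801994 (N 3 (L 789736857764078897306140874 (N 2 (L 193432993927 (L
    219452743761168238071158077458660777328776 E)) (L 855109670114420124588550435134910234828 E)))
    (L 3037699670152 (L 189578395783 (L 789736857764078897249517770 (L 2275165113286791 (L
    859678887071609997131383041853250601164 (N 2 (L 2273293063274631 (L 193432993927 E)) (L 5326983
    (N 3 (L 182976646801260748 (L 855109665296357491689850405227518755020 (L 2275165113516167 E)))
    (L 859595810321873439889326553911983079628 (L 190211801223 (L 789736857764078897249255626 (N 3
    (L 877623465014706361415584437167035252940 (L 144855175591723144 (L
    200121132207910274504424423627 E))) (L 2276058948731015 E))))))))))))))))) E)) (N 2 (N 3 (L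
    144559415554244744 (L 11496529437917387 (L 750571653 E))) (L 67130409094 E)) (N 2 (L 67130425478
    (N 11 (N 3 (L 160944924789997704 (L 9566117698427852816520 (L 195580608647 E))) (L 2769951981704
    (N 13 (L 621632365511466437117608072 (N 3 (L 2272946685034631 (L 144840890530234504 (L
    2310390363013255 E))) (L 46422101322606084231 (L 172817973383 (L 2264142002077831 (N 3 (L
    3038253997026692914217164 (L 2272935947747463 (L 37095676195450716295 E))) (L 2264139855347847
    (L 2272938095100039 (L 172817940615 (L 46422101323142987911 (N 3 (L 2264150592012423 (L
    144840890530234504 (L 2310390362980487 E))) (L 620423439691851803647869064 (L 151075487879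
    E))))))))))))) (N 13 (L 2264139855347847 (L 2272938095100039 (L 172817940615 (N 3 (L
    144840890530234504 (L 46998526886242615431 (L 14348456208210021788680956518745974291383713996
    E))) (N 3 (L 2310390362980487 (L 2264150592012423 (L 144840890530234504 E))) (N 3 (L
    46422242055800291463 (L 2477511835467911 (L 11615262678974667 E))) (L 151075487879 (N 3 (L
    3038108670141466519011532 (L 14348456351849722078236668172450390527983485132 (L
    144840890530234504 E))) (N 3 (L 2272946685034631 (L 144840890530234504 (L 2310390363013255 E)))
    (N 3 (L 144840890530234504 (L 46998526886779453575 (L 11843898918860376309896 E))) (L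
    172817973383 (L 2264142002077831 (N 3 (L 3038253997026692914217164 (L 2272935947747463 (L
    37095676195450716295 E))) E))))))))))))) (L 11377768110751947 (N 13 (N 3 (L 2272935947747463 (L
    11841514404228364402824 (L 3038253997026692914217164 E))) (L 2264139855347847 (L
    2272938095100039 (L 172817940615 (N 2 (L 2735509030470831576264757448376746120 (L
    193928740427056813519667405 E)) (L 11841514404159644926088 (L 180622300276686984 (L 151075487879
    (L 180968641154613384 (L 11859960866758377767048 (N 3 (L 11843898918860376309896 (L
    144840890530234504 (L 40832347889762145268060205875404 E))) (L 172817973383 (L 2264142002077831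
    E))))))))))))) (N 3 (L 144840890530234504 (N 13 (L 151075487879 (L 193933483568924693012414669
    (L 2272935947747463 (L 172817940615 (L 11615262678974667 (L 2310390363013255 (L 2264142002077831
    (L 2272938095100039 (L 2310390362980487 (L 3038108670141466519011532 (L 172817973383 (L
    12430975110 (L 193942928301890432302842061 E))))))))))))) (L 40834709400175006400186434977996
    E))) (N 3 (L 144518180815339656 (L 194376382678565068 (L 12162523270 E))) (L 2761362243720 (L
    97254450566 (L 180628793051021448 E))))))))))) E)) (N 2 (N 17 (L 5326983 (N 3 (L
    182976646801260748 (N 11 (L 9566117698427852816520 (L 12162523270 (L 2761362112648 (N 2 (L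
    855192742051045585957234940028292956364 (L 144559396537041032 E)) (L 11841515931879604289672 (N
    2 (L 855192742051045585957234940028292956364 (L 144559396537368712 E)) (L 96986310022 (L
    155753212812684860229419213 (L 2266369020854407 (L 40834708985492224305264720871628 (L
    11377768110751947 E))))))))))) (L 2266369020493959 E))) (N 3 (L 2266369020297351 (N 3 (L
    144559398374768776 (L 3136869728392 (L 188694163155845324 E))) (L 200121132198687139948179751115
    E))) (L 190211801223 (L 790039089218982554542932170 (N 2 (L 145418142724817032 (L
    610735180648450961227911 E)) (L 2266369020166279 (N 13 (L 151075487879 (N 3 (L 2310390362980487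
    (L 790039089218982554599555274 (L 762424492109191765344391 E))) (L 172817940615 (N 3 (L
    2920304382437228749 (L 12430975110 (L 2272953128239239 E))) (L 2264142002077831 (L
    2266369020952711 (L 2264153372868743 (L 2272949465890951 (N 2 (L 2266369020395655 (L
    193928740427056813519667405 E)) (L 2272938095100039 (N 3 (L 46736403314180817031 (L
    790039089218982554599555274 (L 3038253997026692914217164 E))) (L 172817973383 (N 3 (L
    762424348002799782510727 (L 2310390363013255 (L 790039089218982554599555274 E))) E)))))))))))))
    (L 790043019528302695338606794 (L 790039089218982554529038538 (N 3 (N 2 (L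
    624568924136388607837765768 (L 2266369020362887 E)) (L
    58614219965287243453804693816664983228024020271309 (L 790039089218982554599817418 E))) (L
    3037699670152 (L 189578395783 (L 790039089218982554543194314 (L 2266369020264583 (N 2 (L
    790039089218982554571505866 (N 11 (L 2761362112648 (L 11377768110751947 (L
    155753212812684860229419213 (L 200121132198687140020063305931 (N 2 (L 35682705055878 (L
    35682704711814 E)) (L 620877888399110055536689288 (L 49094143179063463772366 (L
    144559396537041032 (L 200121132198687140020233699531 (L 144559396541038728 (L 144559396537368712
    E))))))))))) E)) (N 3 (L 193928725431476501546533069 (N 2 (L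
    855109665301309028715178452087025434828 (L 2273293063274631 E)) (L 2266369020526727 E)))
    E))))))))))))))))) (L 67130376326 E)) E))))) (N 5 (N 2 (L 67130425478 (N 11 (N 3 (L
    11615276665405643 (L 3038253997026946373910732 (L 626922535890281998504329352 E))) (N 3 (L
    12162523270 (L 11615276665405643 (L 194376382678565068 E))) (L 2761362243720 (L 97254450566 (L
    180628793051021448 (N 3 (L 11903158515875927130248 (L 145685902419722376 (L 11615276665405643
    E))) (L 2769951981704 (N 3 (L 37579982744196284551 (L 11615276665405643 (L
    693983028680488728534217330147439149260 E))) (N 3 (N 2 (L 2495997932519559 (L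
    51123676544661884109904276488328 E)) (N 2 (L 953275872189490561552121814001647819 (L
    144914541963509896 E)) (L 11615276665405643 E))) (L 11377768110751947 (N 3 (L 151892611198713992
    (L 11615276665405643 (L 11903158515845862359176 E))) E))))))))))) E)) (N 2 (N 17 (N 2 (N 2 (L
    35682704711814 (L 155243203004742681088753869 E)) (L 2266369020395655 E)) (N 3 (L
    11615276665405643 (L 636655349468450751439470728 (L 50973444175294584869998281883852 E))) (N 3
    (L 11613063768965323 (L 11615276665405643 (L 3188409925768 E))) (N 3 (L
    40834774697816369262507298128076 (N 3 (L 718261467087050 (L 789736857475878207911493834 (L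
    11894022278 E))) (L 11615276665405643 E))) (L 3037699670152 (L 189578395783 (L 2266369020559495
    (L 2266369020264583 (L 2266369021018247 (N 3 (L 193928725431476501546533069 (N 2 (L
    12545707827113352892575154311 (L 2266369021935751 E)) (L 11615276665405643 E))) (L 5326983 (N 3
    (N 2 (L 2266369021968519 (L 163196689337909384 E)) (L 11615276665405643 (L 182976646801260748
    E))) (L 2266369021051015 (L 190211801223 (L 2266369020592263 (N 3 (N 3 (L 3136869728392 (L
    2889764348143599821 (L 144840942070562952 E))) (L 50973444175294584869997942145228 (L
    11615276665405643 E))) (L 2266369020166279 E))))))))))))))))) (L 67130376326 E)) (L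
    777909916008650 (N 2 (N 2 (L 193432993927 (L 144840873350758536 E)) (L 67130392710 E)) (L
    181076514670379212 E))))) E))))))) (N 5 (L 715379171676293 (N 3 (L 715422146515077 (N 2 (L
    732979939283077 (L 615845577223 E)) (L 750563543797893 E))) (L 2827833989 (N 3 (N 7 (L
    715490933100677 (L 62428242822 (L 187548778631 (N 2 (L 732971357737093 (L 11496527262122187 E))
    (L 181076466634064076 (L 820932288041093 (N 2 (L 9266350044789933065 (L 732971357737093 E))
    E))))))) (L 750572125343877 (L 715413564969093 E))) (L 715387753222277 E))))) (K 3 (L 2806915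
    E))))))))))))))
    (by decide +kernel) (by decide +kernel)

lemma full_all (S : ℕ) (h0 : S ≠ 0) (h27 : S ≤ 27) (h24 : S ≠ 24) : Full S := by
  interval_cases S
  · exact absurd rfl h0
  · exact full1
  · exact full2
  · exact full3
  · exact full4
  · exact full5
  · exact full6
  · exact full7
  · exact full8
  · exact full9
  · exact full10
  · exact full11
  · exact full12
  · exact full13
  · exact full14
  · exact full15
  · exact full16
  · exact full17
  · exact full18
  · exact full19
  · exact full20
  · exact full21
  · exact full22
  · exact full23
  · exact absurd rfl h24
  · exact full25
  · exact full26
  · exact full27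

end RelNum

theorem stmt0 (s r : ℤ) (hs : s ≠ 0) (hr : r ≠ 0) (hs27 : |s| ≤ 27) (hs24 : |s| ≠ 24)
    (h1 : -4 < (s : ℚ) / (r : ℚ)) (h2 : (s : ℚ) / (r : ℚ) < 4) :
    IsRelationNumber ((s : ℂ) / (r : ℂ)) := by
  have hq : |(s : ℚ) / r| < 4 := abs_lt.mpr ⟨h1, h2⟩
  rw [abs_div, div_lt_iff₀ (by positivity)] at hq
  have hlt : |s| < 4 * |r| := by exact_mod_cast hq
  obtain ⟨g, s', r', hg, hco, e1, e2⟩ : ∃ g s' r' : ℤ, 0 < g ∧ IsCoprime s' r' ∧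
      s = s' * g ∧ r = r' * g := by
    have hg0 : 0 < Int.gcd s r := Int.gcd_pos_of_ne_zero_left r hs
    obtain ⟨s', r', hc, e1, e2⟩ := Int.exists_gcd_one hg0
    exact ⟨Int.gcd s r, s', r', by exact_mod_cast hg0, Int.isCoprime_iff_gcd_eq_one.mpr hc, e1, e2⟩
  have hs' : s' ≠ 0 := by rintro rfl; simp at e1; exact hs e1
  have hgC : (g : ℂ) ≠ 0 := by exact_mod_cast hg.ne'
  have eq1 : (s : ℂ) / (r : ℂ) = (s' : ℂ) / (r' : ℂ) := by
    rw [e1, e2]; push_cast; exact mul_div_mul_right _ _ hgC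
  have hab : |s| = |s'| * g := by rw [e1, abs_mul, abs_of_pos hg]
  have hab2 : |r| = |r'| * g := by rw [e2, abs_mul, abs_of_pos hg]
  have hpos : 0 < |s'| := abs_pos.mpr hs'
  have hlt' : |s'| < 4 * |r'| := by
    rw [hab, hab2] at hlt
    have : |s'| * g < (4 * |r'|) * g := by linarith
    exact lt_of_mul_lt_mul_right this hg.le
  have hle : |s'| ≤ |s| := by rw [hab]; nlinarith
  have h24' : |s'| ≠ 24 := by
    intro h
    rw [hab, h] at hs27 hs24
    omega
  have hnat : (s'.natAbs : ℤ) = |s'| := Int.natCast_natAbs s'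
  have hF := RelNum.full_all s'.natAbs (by omega) (by omega) (by omega)
  rw [eq1]
  rcases Int.natAbs_eq s' with e | e
  · have := hF r' (by rw [← e]; exact hco) (by rw [hnat]; exact hlt')
    rw [RelNum.Good] at this
    have e3 : (s' : ℂ) = ((s'.natAbs : ℕ) : ℂ) := by
      have := congrArg (fun z : ℤ => (z : ℂ)) e
      simpa using this
    rw [e3]; exact this
  · have := hF (-r') (by
      have h5 : ((s'.natAbs : ℕ) : ℤ) = -s' := by omega
      rw [h5]; exact hco.neg_neg) (by rw [hnat, abs_neg]; exact hlt')
    rw [RelNum.Good] at this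
    have e3 : (s' : ℂ) = -((s'.natAbs : ℕ) : ℂ) := by
      have := congrArg (fun z : ℤ => (z : ℂ)) e
      simpa using this
    rw [e3]
    have e4 : -((s'.natAbs : ℕ) : ℂ) / (r' : ℂ) = ((s'.natAbs : ℕ) : ℂ) / ((-r' : ℤ) : ℂ) := by
      push_cast; rw [div_neg, neg_div]
    rw [e4]; exact this
end

section
/- Let s be a positive integer with s ≤ 27 and s ≠ 24. Then for all but finitely many nonzero integers r, the rational number s/r is a 2-step relation number. -/
lemma matA_zpow (n : ℤ) : (matA ^ n).val = !![1, 0; (n : ℂ), 1] := by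
  induction n using Int.induction_on with
  | zero => ext i j; fin_cases i <;> fin_cases j <;> simp
  | succ n ih =>
    rw [zpow_add_one, Matrix.SpecialLinearGroup.coe_mul, ih]
    ext i j; fin_cases i <;> fin_cases j <;> simp [matA]
  | pred n ih =>
    have hi : ((matA)⁻¹).val = !![1, 0; -1, 1] := by
      rw [Matrix.SpecialLinearGroup.coe_inv, Matrix.adjugate_fin_two]
      simp [matA]
    rw [zpow_sub_one, Matrix.SpecialLinearGroup.coe_mul, ih, hi]
    ext i j; fin_cases i <;> fin_cases j <;> simp <;> ring

lemma matB_zpow (q : ℂ) (n : ℤ) : (matB q ^ n).val = !![1, (n : ℂ) * q; 0, 1] := by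
  induction n using Int.induction_on with
  | zero => ext i j; fin_cases i <;> fin_cases j <;> simp
  | succ n ih =>
    rw [zpow_add_one, Matrix.SpecialLinearGroup.coe_mul, ih]
    ext i j; fin_cases i <;> fin_cases j <;> simp [matB] <;> ring
  | pred n ih =>
    have hi : ((matB q)⁻¹).val = !![1, -q; 0, 1] := by
      rw [Matrix.SpecialLinearGroup.coe_inv, Matrix.adjugate_fin_two]
      simp [matB]
    rw [zpow_sub_one, Matrix.SpecialLinearGroup.coe_mul, ih, hi]
    ext i j; fin_cases i <;> fin_cases j <;> simp <;> ring

lemma step_two (q : ℂ) (m₁ m₂ m₃ m₄ m₅ : ℤ) (h1 : m₁ ≠ 0) (h2 : m₂ ≠ 0) (h3 : m₃ ≠ 0)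
    (h4 : m₄ ≠ 0) (h5 : m₅ ≠ 0)
    (h : (m₁ + m₃ + m₅ : ℂ) + q * (m₁ * m₂ * (m₃ + m₅) + (m₁ + m₃) * m₄ * m₅)
      + q ^ 2 * (m₁ * m₂ * m₃ * m₄ * m₅) = 0) : IsStepRelationNumber 2 q := by
  refine ⟨2, le_rfl, ![m₁, m₂, m₃, m₄, m₅], ?_, ?_⟩
  · intro i; fin_cases i <;> simp [*]
  · have e : (List.ofFn (fun i : Fin (2 * 2 + 1) =>
      (if (i : ℕ) % 2 = 0 then matB q else matA) ^ ((![m₁, m₂, m₃, m₄, m₅] : Fin 5 → ℤ) i))).prod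
      = matB q ^ m₁ * (matA ^ m₂ * (matB q ^ m₃ * (matA ^ m₄ * matB q ^ m₅))) := by
      simp [List.ofFn_succ, Fin.succ]
    rw [e]
    simp only [Matrix.SpecialLinearGroup.coe_mul, matA_zpow, matB_zpow]
    simp [Matrix.mul_apply, Fin.sum_univ_two]
    linear_combination q * h

/-- The explicit two-step relation attached to a good representative. -/
lemma good_step (s m' W y c g k r : ℤ) (hr : r ≠ 0) (hrW : r = W + s * (m' * y) * k)
    (hgW : g ∣ W) (hgs : g ∣ s * (m' * y)) (hc : W * c = s * (m' * y) * y + g)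
    (hm : m' ≠ 0) (hy : y ≠ 0) (hk : k ≠ 0) (hh : y + c * k ≠ 0) :
    IsStepRelationNumber 2 ((s : ℂ) / (r : ℂ)) := by
  obtain ⟨ρ, hρ⟩ : g ∣ r := by
    rw [hrW]; exact dvd_add hgW (hgs.mul_right k)
  have hg0 : g ≠ 0 := by rintro rfl; simp at hρ; exact hr hρ
  have hρ0 : ρ ≠ 0 := by rintro rfl; simp at hρ; exact hr hρ
  have key : c * (g * ρ) = s * (m' * y) * (y + c * k) + g := by
    rw [← hρ, hrW]; linear_combination hc
  refine step_two _ (-(ρ * y)) (-(m' * (y + c * k))) (-k) (m' * y) (ρ * (y + c * k))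
    (by simp [hρ0, hy]) (neg_ne_zero.2 (mul_ne_zero hm hh)) (by simpa using hk)
    (mul_ne_zero hm hy) (mul_ne_zero hρ0 hh) ?_
  have keyC : (c : ℂ) * (g * ρ) = s * (m' * y) * (y + c * k) + g := by exact_mod_cast key
  have hg0' : (g : ℂ) ≠ 0 := by exact_mod_cast hg0
  have hρ0' : (ρ : ℂ) ≠ 0 := by exact_mod_cast hρ0
  have hq : (s : ℂ) / r * (ρ * y * m' * (y + c * k)) = c * ρ - 1 := by
    rw [hρ]; push_cast; field_simp; linear_combination -keyC
  generalize (s : ℂ) / r = q at hq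
  push_cast
  linear_combination (-(k : ℂ)) * (1 + q * (ρ * y * m' * (y + c * k))) * hq

/-- Certificate `(m', W, y, g)`: the class of `W` modulo `s * m' * y`. -/
abbrev Cert := ℤ × ℤ × ℤ × ℤ

def certOk (s : ℤ) (t : Cert) : Bool :=
  let S := s * (t.1 * t.2.2.1)
  let T := S * t.2.2.1 + t.2.2.2
  t.1 != 0 && t.2.2.1 != 0 && T != 0 && t.2.1 % t.2.2.2 == 0 && S % t.2.2.2 == 0 &&
    T % t.2.1 == 0

def coverOk (s M : ℕ) (L : List Cert) : Bool :=
  decide (0 < M) && L.all (certOk s) &&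
  L.all (fun t => ((s : ℤ) * M) % (s * (t.1 * t.2.2.1)) == 0) &&
  (List.range (s * M)).all fun r =>
    L.any fun t => ((r : ℤ) - t.2.1) % (s * (t.1 * t.2.2.1)) == 0

lemma cert_finite (s : ℤ) (t : Cert) (ht : certOk s t = true) :
    {r : ℤ | r ≠ 0 ∧ (s * (t.1 * t.2.2.1)) ∣ r - t.2.1 ∧
      ¬ IsStepRelationNumber 2 ((s : ℂ) / (r : ℂ))}.Finite := by
  obtain ⟨m', W, y, g⟩ := t
  simp only [certOk, Bool.and_eq_true, bne_iff_ne, beq_iff_eq] at ht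
  obtain ⟨⟨⟨⟨⟨hm, hy⟩, hT⟩, h1⟩, h2⟩, h3⟩ := ht
  obtain ⟨c, hc⟩ := Int.dvd_of_emod_eq_zero h3
  have hc0 : c ≠ 0 := by rintro rfl; simp at hc; exact hT hc
  refine ((Set.finite_Icc (-|y|) |y|).image (fun k => W + s * (m' * y) * k)).subset ?_
  rintro r ⟨hr, ⟨k, hk⟩, hn⟩
  refine ⟨k, ?_, by simp only; linear_combination -hk⟩
  by_contra hkk
  have hk' : |y| < |k| := by
    by_contra hle
    exact hkk (abs_le.1 (not_lt.1 hle))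
  apply hn
  refine good_step s m' W y c g k r hr (by linear_combination hk) (Int.dvd_of_emod_eq_zero h1)
    (Int.dvd_of_emod_eq_zero h2) hc.symm hm hy ?_ ?_
  · rintro rfl; simp at hk'; exact absurd (abs_nonneg y) (not_le.2 hk')
  · intro h
    have h' : |y| = |c| * |k| := by
      rw [← abs_mul, ← abs_neg y]; congr 1; linarith
    have : 1 ≤ |c| := Int.one_le_abs hc0
    nlinarith [abs_nonneg k]

lemma cover_finite (s M : ℕ) (L : List Cert) (hs : 0 < s) (h : coverOk s M L = true) :
    {r : ℤ | r ≠ 0 ∧ ¬ IsStepRelationNumber 2 ((s : ℂ) / (r : ℂ))}.Finite := by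
  simp only [coverOk, Bool.and_eq_true, decide_eq_true_eq, List.all_eq_true, List.any_eq_true,
    List.mem_range, beq_iff_eq] at h
  obtain ⟨⟨⟨hM, h1⟩, h2⟩, h3⟩ := h
  refine (Set.Finite.biUnion (List.finite_toSet L)
    (fun t ht => cert_finite s t (h1 t ht))).subset ?_
  rintro r ⟨hr, hn⟩
  have hN : (0 : ℤ) < (s : ℤ) * M := by positivity
  have a1 := Int.emod_nonneg r hN.ne'
  have a2 := Int.emod_lt_of_pos r hN
  obtain ⟨t, ht, hd⟩ := h3 (r % ((s : ℤ) * M)).toNat (by zify; rw [Int.toNat_of_nonneg a1]; exact a2)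
  rw [Int.toNat_of_nonneg a1] at hd
  simp only [Set.mem_iUnion]
  refine ⟨t, ht, hr, ?_, by exact_mod_cast hn⟩
  have b1 := Int.dvd_of_emod_eq_zero hd
  have b2 := Int.dvd_of_emod_eq_zero (h2 t ht)
  have b3 : r - t.2.1 = (r % ((s : ℤ) * M) - t.2.1) + (s * M) * (r / ((s : ℤ) * M)) := by
    linear_combination - Int.emod_add_mul_ediv r ((s : ℤ) * M)
  rw [b3]
  exact dvd_add b1 (b2.mul_right _)

theorem stmt1 (s : ℕ) (hs : 0 < s) (hs27 : s ≤ 27) (hs24 : s ≠ 24) :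
    {r : ℤ | r ≠ 0 ∧ ¬ IsStepRelationNumber 2 ((s : ℂ) / (r : ℂ))}.Finite := by
  interval_cases s
  · exact cover_finite 1 1 [
      (1, 1, 1, 1)] hs (by decide +kernel)
  · exact cover_finite 2 1 [
      (1, 2, 1, 2), (1, 1, 1, 1)] hs (by decide +kernel)
  · exact cover_finite 3 1 [
      (1, 3, 1, 3), (1, 1, 1, 1), (1, -1, 1, 1)] hs (by decide +kernel)
  · exact cover_finite 4 1 [
      (1, 4, 1, 4), (1, 1, 1, 1), (1, 2, 1, 2), (1, -1, 1, 1)] hs (by decide +kernel)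
  · exact cover_finite 5 1 [
      (1, 5, 1, 5), (1, 1, 1, 1), (1, 2, 1, 1), (1, -2, 1, 1), (1, -1, 1, 1)] hs (by decide +kernel)
  · exact cover_finite 6 1 [
      (1, 6, 1, 6), (1, 1, 1, 1), (1, 2, 1, 2), (1, 3, 1, 3), (1, -2, 1, 2),
      (1, -1, 1, 1)] hs (by decide +kernel)
  · exact cover_finite 7 1 [
      (1, 7, 1, 7), (1, 1, 1, 1), (1, 2, 1, 1), (1, 3, 1, -1), (1, -3, 1, -1),
      (1, -2, 1, 1), (1, -1, 1, 1)] hs (by decide +kernel)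
  · exact cover_finite 8 1 [
      (1, 8, 1, 8), (1, 1, 1, 1), (1, 2, 1, 2), (1, 3, 1, 1), (1, 4, 1, 4),
      (1, -3, 1, 1), (1, -2, 1, 2), (1, -1, 1, 1)] hs (by decide +kernel)
  · exact cover_finite 9 1 [
      (1, 9, 1, 9), (1, 1, 1, 1), (1, 2, 1, 1), (1, 3, 1, 3), (1, 4, 1, -1),
      (1, -4, 1, -1), (1, -3, 1, 3), (1, -2, 1, 1), (1, -1, 1, 1)] hs (by decide +kernel)
  · exact cover_finite 10 1 [
      (1, 10, 1, 10), (1, 1, 1, 1), (1, 2, 1, 2), (1, 3, 1, -1), (1, 4, 1, 2),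
      (1, 5, 1, 5), (1, -4, 1, 2), (1, -3, 1, -1), (1, -2, 1, 2), (1, -1, 1, 1)] hs (by decide +kernel)
  · exact cover_finite 11 1 [
      (1, 11, 1, 11), (1, 1, 1, 1), (1, 2, 1, 1), (1, 3, 1, 1), (1, 4, 1, 1),
      (1, 5, 1, -1), (1, -5, 1, -1), (1, -4, 1, 1), (1, -3, 1, 1), (1, -2, 1, 1),
      (1, -1, 1, 1)] hs (by decide +kernel)
  · exact cover_finite 12 2 [
      (1, 12, 1, 12), (1, 1, 1, 1), (1, 2, 1, 2), (1, 3, 1, 3), (1, 4, 1, 4),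
      (1, 6, 1, 6), (1, -4, 1, 4), (1, -3, 1, 3), (1, -2, 1, 2), (1, -1, 1, 1),
      (2, 5, 1, 1), (1, 7, 2, 1), (1, -7, 2, 1), (2, -5, 1, 1)] hs (by decide +kernel)
  · exact cover_finite 13 2 [
      (1, 13, 1, 13), (1, 1, 1, 1), (1, 2, 1, 1), (1, 3, 1, -1), (1, 4, 1, -1),
      (1, 6, 1, -1), (1, -6, 1, -1), (1, -4, 1, -1), (1, -3, 1, -1), (1, -2, 1, 1),
      (1, -1, 1, 1), (2, 5, 1, -1), (2, 8, 1, -2), (2, -8, 1, -2), (2, -5, 1, -1)] hs (by decide +kernel)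
  · exact cover_finite 14 1 [
      (1, 14, 1, 14), (1, 1, 1, 1), (1, 2, 1, 2), (1, 3, 1, 1), (1, 4, 1, 2),
      (1, 5, 1, 1), (1, 6, 1, -2), (1, 7, 1, 7), (1, -6, 1, -2), (1, -5, 1, 1),
      (1, -4, 1, 2), (1, -3, 1, 1), (1, -2, 1, 2), (1, -1, 1, 1)] hs (by decide +kernel)
  · exact cover_finite 15 1 [
      (1, 15, 1, 15), (1, 1, 1, 1), (1, 2, 1, 1), (1, 3, 1, 3), (1, 4, 1, 1),
      (1, 5, 1, 5), (1, 6, 1, 3), (1, 7, 1, -1), (1, -7, 1, -1), (1, -6, 1, 3),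
      (1, -5, 1, 5), (1, -4, 1, 1), (1, -3, 1, 3), (1, -2, 1, 1), (1, -1, 1, 1)] hs (by decide +kernel)
  · exact cover_finite 16 2 [
      (1, 16, 1, 16), (1, 1, 1, 1), (1, 2, 1, 2), (1, 3, 1, -1), (1, 4, 1, 4),
      (1, 5, 1, -1), (1, 6, 1, 2), (1, 8, 1, 8), (1, -6, 1, 2), (1, -5, 1, -1),
      (1, -4, 1, 4), (1, -3, 1, -1), (1, -2, 1, 2), (1, -1, 1, 1), (1, 7, 2, -1),
      (1, 9, 2, -1), (1, -9, 2, -1), (1, -7, 2, -1)] hs (by decide +kernel)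
  · exact cover_finite 17 2 [
      (1, 17, 1, 17), (1, 1, 1, 1), (1, 2, 1, 1), (1, 3, 1, 1), (1, 4, 1, -1),
      (1, 6, 1, 1), (1, 8, 1, -1), (1, -8, 1, -1), (1, -6, 1, 1), (1, -4, 1, -1),
      (1, -3, 1, 1), (1, -2, 1, 1), (1, -1, 1, 1), (2, 5, 1, 1), (2, 7, 1, 1),
      (1, 10, 2, 2), (2, 12, 1, 2), (2, -12, 1, 2), (1, -10, 2, 2), (2, -7, 1, 1),
      (2, -5, 1, 1)] hs (by decide +kernel)
  · exact cover_finite 18 6 [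
      (1, 18, 1, 18), (1, 1, 1, 1), (1, 2, 1, 2), (1, 3, 1, 3), (1, 4, 1, 2),
      (1, 6, 1, 6), (1, 8, 1, -2), (1, 9, 1, 9), (1, -8, 1, -2), (1, -6, 1, 6),
      (1, -4, 1, 2), (1, -3, 1, 3), (1, -2, 1, 2), (1, -1, 1, 1), (2, 5, 1, -1),
      (2, 7, 1, -1), (2, -7, 1, -1), (2, -5, 1, -1), (3, 5, 1, 1), (1, 7, 3, -1),
      (3, 11, 1, 1), (1, 23, 3, -1), (1, -23, 3, -1), (3, -11, 1, 1), (1, -7, 3, -1),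
      (3, -5, 1, 1), (2, 13, 3, 1), (2, 25, 3, 1), (2, -25, 3, 1), (2, -13, 3, 1)] hs (by decide +kernel)
  · exact cover_finite 19 2 [
      (1, 19, 1, 19), (1, 1, 1, 1), (1, 2, 1, 1), (1, 3, 1, -1), (1, 4, 1, 1),
      (1, 5, 1, 1), (1, 6, 1, -1), (1, 9, 1, -1), (1, -9, 1, -1), (1, -6, 1, -1),
      (1, -5, 1, 1), (1, -4, 1, 1), (1, -3, 1, -1), (1, -2, 1, 1), (1, -1, 1, 1),
      (1, 7, 2, 1), (2, 8, 1, 2), (1, 11, 2, 1), (2, 12, 1, -2), (2, -12, 1, -2),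
      (1, -11, 2, 1), (2, -8, 1, 2), (1, -7, 2, 1)] hs (by decide +kernel)
  · exact cover_finite 20 4 [
      (1, 20, 1, 20), (1, 1, 1, 1), (1, 2, 1, 2), (1, 3, 1, 1), (1, 4, 1, 4),
      (1, 5, 1, 5), (1, 6, 1, -2), (1, 7, 1, 1), (1, 8, 1, 4), (1, 10, 1, 10),
      (1, -8, 1, 4), (1, -7, 1, 1), (1, -6, 1, -2), (1, -5, 1, 5), (1, -4, 1, 4),
      (1, -3, 1, 1), (1, -2, 1, 2), (1, -1, 1, 1), (1, 9, 2, 1), (1, -9, 2, 1),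
      (1, 11, 4, -1), (1, 29, 4, -1), (1, -29, 4, -1), (1, -11, 4, -1)] hs (by decide +kernel)
  · exact cover_finite 21 6 [
      (1, 21, 1, 21), (1, 1, 1, 1), (1, 2, 1, 1), (1, 3, 1, 3), (1, 4, 1, -1),
      (1, 5, 1, -1), (1, 6, 1, 3), (1, 7, 1, 7), (1, 9, 1, -3), (1, 10, 1, -1),
      (1, -10, 1, -1), (1, -9, 1, -3), (1, -7, 1, 7), (1, -6, 1, 3), (1, -5, 1, -1),
      (1, -4, 1, -1), (1, -3, 1, 3), (1, -2, 1, 1), (1, -1, 1, 1), (2, 8, 1, -2),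
      (2, -8, 1, -2), (3, 8, 1, 1), (3, -8, 1, 1), (2, 13, 3, -1), (2, 29, 3, -1),
      (2, -29, 3, -1), (2, -13, 3, -1)] hs (by decide +kernel)
  · exact cover_finite 22 12 [
      (1, 22, 1, 22), (1, 1, 1, 1), (1, 2, 1, 2), (1, 3, 1, -1), (1, 4, 1, 2),
      (1, 6, 1, 2), (1, 7, 1, -1), (1, 8, 1, 2), (1, 10, 1, -2), (1, 11, 1, 11),
      (1, -10, 1, -2), (1, -8, 1, 2), (1, -7, 1, -1), (1, -6, 1, 2), (1, -4, 1, 2),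
      (1, -3, 1, -1), (1, -2, 1, 2), (1, -1, 1, 1), (2, 5, 1, 1), (2, 9, 1, 1),
      (2, -9, 1, 1), (2, -5, 1, 1), (3, 5, 1, -1), (3, 9, 1, -3), (3, 13, 1, -1),
      (1, -39, 3, -3), (1, 39, 3, -3), (3, -13, 1, -1), (3, -9, 1, -3), (3, -5, 1, -1),
      (1, 13, 4, -1), (1, 27, 4, -1), (1, -27, 4, -1), (1, -13, 4, -1), (6, 17, 2, -1),
      (6, 31, 2, -1), (6, -31, 2, -1), (6, -17, 2, -1)] hs (by decide +kernel)
  · exact cover_finite 23 4 [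
      (1, 23, 1, 23), (1, 1, 1, 1), (1, 2, 1, 1), (1, 3, 1, 1), (1, 4, 1, 1),
      (1, 6, 1, 1), (1, 8, 1, 1), (1, 11, 1, -1), (1, -11, 1, -1), (1, -8, 1, 1),
      (1, -6, 1, 1), (1, -4, 1, 1), (1, -3, 1, 1), (1, -2, 1, 1), (1, -1, 1, 1),
      (2, 5, 1, -1), (1, 7, 2, -1), (2, 9, 1, -1), (1, 10, 2, -2), (1, 13, 2, -1),
      (2, 16, 1, 2), (1, 18, 2, -2), (1, -18, 2, -2), (2, -16, 1, 2), (1, -13, 2, -1),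
      (1, -10, 2, -2), (2, -9, 1, -1), (1, -7, 2, -1), (2, -5, 1, -1), (2, 14, 2, -2),
      (4, 32, 1, 4), (4, -32, 1, 4), (2, -14, 2, -2)] hs (by decide +kernel)
  · exact absurd rfl hs24
  · exact cover_finite 25 4 [
      (1, 25, 1, 25), (1, 1, 1, 1), (1, 2, 1, 1), (1, 3, 1, -1), (1, 4, 1, -1),
      (1, 5, 1, 5), (1, 6, 1, -1), (1, 8, 1, -1), (1, 10, 1, 5), (1, 12, 1, -1),
      (1, -12, 1, -1), (1, -10, 1, 5), (1, -8, 1, -1), (1, -6, 1, -1), (1, -5, 1, 5),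
      (1, -4, 1, -1), (1, -3, 1, -1), (1, -2, 1, 1), (1, -1, 1, 1), (2, 7, 1, -1),
      (1, 9, 2, -1), (1, 11, 2, -1), (1, 14, 2, -2), (2, 16, 1, -2), (2, -16, 1, -2),
      (1, -14, 2, -2), (1, -11, 2, -1), (1, -9, 2, -1), (2, -7, 1, -1), (2, 18, 2, -2),
      (4, 32, 1, -4), (4, -32, 1, -4), (2, -18, 2, -2)] hs (by decide +kernel)
  · exact cover_finite 26 60 [
      (1, 26, 1, 26), (1, 1, 1, 1), (1, 2, 1, 2), (1, 3, 1, 1), (1, 4, 1, 2),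
      (1, 5, 1, -1), (1, 6, 1, -2), (1, 8, 1, -2), (1, 9, 1, 1), (1, 12, 1, -2),
      (1, 13, 1, 13), (1, -12, 1, -2), (1, -9, 1, 1), (1, -8, 1, -2), (1, -6, 1, -2),
      (1, -5, 1, -1), (1, -4, 1, 2), (1, -3, 1, 1), (1, -2, 1, 2), (1, -1, 1, 1),
      (1, 7, 2, 1), (2, 10, 1, -2), (1, 15, 2, 1), (2, 16, 1, -4), (2, -16, 1, -4),
      (1, -15, 2, 1), (2, -10, 1, -2), (1, -7, 2, 1), (3, 7, 1, -1), (3, 11, 1, -1),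
      (3, 15, 1, -3), (1, 33, 3, -3), (1, -33, 3, -3), (3, -15, 1, -3), (3, -11, 1, -1),
      (3, -7, 1, -1), (2, 11, 2, 1), (2, 19, 2, 1), (2, -19, 2, 1), (2, -11, 2, 1),
      (1, 7, 5, 1), (1, 11, 5, -1), (5, 15, 1, 5), (1, -93, 5, 1), (5, 45, 1, 5),
      (1, 59, 5, -1), (1, -59, 5, -1), (5, -45, 1, 5), (1, 93, 5, 1), (5, -15, 1, 5),
      (1, -11, 5, -1), (1, -7, 5, 1), (5, 33, 4, -1), (5, 63, 4, -1), (5, -63, 4, -1),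
      (5, -33, 4, -1), (30, 19, 1, -1), (30, 41, 1, -1), (30, -41, 1, -1), (30, -19, 1, -1)] hs (by decide +kernel)
  · exact cover_finite 27 60 [
      (1, 27, 1, 27), (1, 1, 1, 1), (1, 2, 1, 1), (1, 3, 1, 3), (1, 4, 1, 1),
      (1, 6, 1, 3), (1, 7, 1, 1), (1, 9, 1, 9), (1, 12, 1, -3), (1, 13, 1, -1),
      (1, -13, 1, -1), (1, -12, 1, -3), (1, -9, 1, 9), (1, -7, 1, 1), (1, -6, 1, 3),
      (1, -4, 1, 1), (1, -3, 1, 3), (1, -2, 1, 1), (1, -1, 1, 1), (2, 5, 1, 1),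
      (2, 8, 1, 2), (1, 10, 2, 2), (2, 11, 1, 1), (1, 22, 2, 2), (1, -22, 2, 2),
      (2, -11, 1, 1), (1, -10, 2, 2), (2, -8, 1, 2), (2, -5, 1, 1), (3, 8, 1, -1),
      (3, 10, 1, -1), (1, 11, 3, -1), (3, 16, 1, -1), (3, -16, 1, -1), (1, -11, 3, -1),
      (3, -10, 1, -1), (3, -8, 1, -1), (4, 16, 1, 4), (4, -16, 1, 4), (5, 8, 1, 1),
      (5, 10, 1, 5), (5, 17, 1, 1), (5, 35, 1, 5), (5, -35, 1, 5), (5, -17, 1, 1),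
      (5, -10, 1, 5), (5, -8, 1, 1), (3, 17, 2, -1), (3, 19, 2, -1), (3, -19, 2, -1),
      (3, -17, 2, -1), (2, 19, 5, -1), (1, 37, 10, 1), (2, 71, 5, -1), (1, 73, 10, 1),
      (1, -73, 10, 1), (2, -71, 5, -1), (1, -37, 10, 1), (2, -19, 5, -1), (6, 38, 2, -2),
      (6, -38, 2, -2), (3, 44, 5, -1), (3, 46, 5, -1), (3, -46, 5, -1), (3, -44, 5, -1)] hs (by decide +kernel)
end
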